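/- arXiv:2302.01077 — 4 statements merged into one kernel-verified Lean document; each statement's English description precedes it below -/
import Mathlib

section
/- Let f be a bijective transformation of G_∞(H) which preserves the ortho-adjacency relation in both directions (i.e., X, Y are ortho-adjacent if and only if f(X), f(Y) are ortho-adjacent). Then for every A-component C of G_∞(H), either there exists a unitary or anti-unitary operator U on H such that f(X) = U(X) for all X ∈ C, or there exists a unitary or anti-unitary operator U on H such that f(X) = (U(X))^⊥ for all X ∈ C. -/
open Module Submodule Classical

variable {H : Type*} [NormedAddCommGroup H] [InnerProductSpace ℂ H] [CompleteSpace H]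

/-- The orthogonal projection of `H` onto a closed subspace `K`, as a map `H →L[ℂ] H`
(defined to be `0` if `K` is not closed). -/
noncomputable def projCLM (K : Submodule ℂ H) : H →L[ℂ] H :=
  if h : IsClosed (K : Set H) then
    haveI : CompleteSpace K := h.completeSpace_coe
    K.subtypeL.comp (orthogonalProjection K)
  else 0

/-- Two (closed) subspaces are compatible if their orthogonal projections commute. -/
def Compatible (K L : Submodule ℂ H) : Prop := Commute (projCLM K) (projCLM L)

/-- `W` is a subspace of `X` of finite codimension `n` in `X`. -/
def CodimIn (W X : Submodule ℂ H) (n : ℕ) : Prop :=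
  W ≤ X ∧ FiniteDimensional ℂ (↥X ⧸ W.comap X.subtype) ∧
    finrank ℂ (↥X ⧸ W.comap X.subtype) = n

/-- `X` and `Y` are adjacent: `X ∩ Y` is a hyperplane in both `X` and `Y`. -/
def Adjacent (X Y : Submodule ℂ H) : Prop :=
  CodimIn (X ⊓ Y) X 1 ∧ CodimIn (X ⊓ Y) Y 1

/-- `X` and `Y` are ortho-adjacent: adjacent and compatible. -/
def OrthoAdjacent (X Y : Submodule ℂ H) : Prop := Adjacent X Y ∧ Compatible X Y

/-- The Grassmannian `G_∞(H)` of closed subspaces of `H` whose dimension and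
codimension both are infinite. -/
def Ginf : Set (Submodule ℂ H) :=
  {X | IsClosed (X : Set H) ∧ ¬FiniteDimensional ℂ X ∧ ¬FiniteDimensional ℂ Xᗮ}

/-- `X ∩ Y` has the same finite codimension in both `X` and `Y`. -/
def SameFinCodim (X Y : Submodule ℂ H) : Prop :=
  ∃ n : ℕ, CodimIn (X ⊓ Y) X n ∧ CodimIn (X ⊓ Y) Y n

/-- An `A`-component of `G_∞(H)`: a set of elements pairwise at the same finite
codimension, maximal with respect to this property. -/
def IsAComponent (C : Set (Submodule ℂ H)) : Prop :=
  C ⊆ Ginf ∧ (∀ X ∈ C, ∀ Y ∈ C, SameFinCodim X Y) ∧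
    ∀ D : Set (Submodule ℂ H), D ⊆ Ginf → (∀ X ∈ D, ∀ Y ∈ D, SameFinCodim X Y) →
      C ⊆ D → D = C

/-- The star `S(X)`: all closed subspaces of `H` containing `X` as a hyperplane. -/
def starSet (X : Submodule ℂ H) : Set (Submodule ℂ H) :=
  {Y | IsClosed (Y : Set H) ∧ CodimIn X Y 1}

/-- The top `G¹(X)`: all closed hyperplanes of `X`. -/
def topSet (X : Submodule ℂ H) : Set (Submodule ℂ H) :=
  {M | IsClosed (M : Set H) ∧ CodimIn M X 1}

/-- The image `U(M)` of a subspace `M ⊆ X` under a linear isometry `U : X ≃ X'`,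
viewed as a subspace of `H`. -/
def imL (X X' : Submodule ℂ H) (U : ↥X ≃ₗᵢ[ℂ] ↥X') (M : Submodule ℂ H) : Submodule ℂ H :=
  Submodule.map X'.subtype (Submodule.map U.toLinearEquiv.toLinearMap (M.comap X.subtype))

/-- The image `U(M)` of a subspace `M ⊆ X` under a conjugate-linear isometry `U : X ≃ X'`,
viewed as a subspace of `H`. -/
def imC (X X' : Submodule ℂ H) (U : ↥X ≃ₗᵢ⋆[ℂ] ↥X') (M : Submodule ℂ H) : Submodule ℂ H :=
  Submodule.map X'.subtype (Submodule.map U.toLinearEquiv.toLinearMap (M.comap X.subtype))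

/-- The Grassmannian `G_k(H)` of `k`-dimensional subspaces of `H`. -/
def Gk (k : ℕ) : Set (Submodule ℂ H) :=
  {X | FiniteDimensional ℂ X ∧ finrank ℂ X = k}

/-- The Grassmannian `G^k(H)` of closed subspaces of `H` of codimension `k`. -/
def GCk (k : ℕ) : Set (Submodule ℂ H) :=
  {X | IsClosed (X : Set H) ∧ FiniteDimensional ℂ (H ⧸ X) ∧ finrank ℂ (H ⧸ X) = k}


set_option linter.unusedSectionVars false



lemma mem_of_perp (K : Submodule ℂ H) [FiniteDimensional ℂ K] (z : H)
    (h : ∀ w, (∀ k ∈ K, inner ℂ k w = 0) → inner ℂ w z = 0) : z ∈ K := by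
  rw [← Submodule.orthogonal_orthogonal K]
  intro w hw
  exact h w hw

lemma exists_perp (hH : ¬FiniteDimensional ℂ H) (K : Submodule ℂ H) [FiniteDimensional ℂ K] :
    ∃ z : H, ‖z‖ = 1 ∧ z ∈ Kᗮ := by
  have hne : Kᗮ ≠ ⊥ := by
    intro h
    apply hH
    rw [Submodule.orthogonal_eq_bot_iff] at h
    subst h
    exact Module.Finite.equiv (Submodule.topEquiv (R := ℂ) (M := H))
  obtain ⟨z, hz, hz0⟩ := Submodule.exists_mem_ne_zero_of_ne_bot hne
  refine ⟨(‖z‖⁻¹ : ℂ) • z, ?_, Submodule.smul_mem _ _ hz⟩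
  have : ‖z‖ ≠ 0 := by simpa using hz0
  rw [norm_smul]; simp [this]

lemma exists_perp3 (hH : ¬FiniteDimensional ℂ H) (a b c : H) :
    ∃ z : H, ‖z‖ = 1 ∧ inner ℂ a z = 0 ∧ inner ℂ b z = 0 ∧ inner ℂ c z = 0 := by
  have : FiniteDimensional ℂ (span ℂ ({a, b, c} : Set H)) :=
    FiniteDimensional.span_of_finite ℂ (by simp)
  obtain ⟨z, hz, hz'⟩ := exists_perp hH (span ℂ ({a, b, c} : Set H))
  exact ⟨z, hz, hz' a (subset_span (by simp)), hz' b (subset_span (by simp)),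
    hz' c (subset_span (by simp))⟩

lemma uhl_comb (φ : H → H) (hort : ∀ x y, inner ℂ x y = 0 ↔ inner ℂ (φ x) (φ y) = 0)
    (hsurj : ∀ y, ∃ x, ∃ t : ℂ, y = t • φ x) (x y : H) (a b : ℂ) :
    ∃ a' b' : ℂ, a' • φ x + b' • φ y = φ (a • x + b • y) := by
  rw [← Submodule.mem_span_pair]
  have : FiniteDimensional ℂ (span ℂ ({φ x, φ y} : Set H)) :=
    FiniteDimensional.span_of_finite ℂ (by simp)
  apply mem_of_perp
  intro w hw
  obtain ⟨z, t, rfl⟩ := hsurj w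
  by_cases ht : t = 0
  · simp [ht]
  have h1 := hw (φ x) (subset_span (by simp))
  have h2 := hw (φ y) (subset_span (by simp))
  rw [inner_smul_right, mul_eq_zero, or_iff_right ht, ← hort] at h1 h2
  rw [inner_smul_left, mul_eq_zero]; right
  rw [← hort, inner_eq_zero_symm, inner_add_left, inner_smul_left, inner_smul_left, h1, h2]
  simp

lemma ringhom_complex (σ : ℂ →+* ℂ) (hc : ∀ t, σ (starRingEnd ℂ t) = starRingEnd ℂ (σ t)) :
    (∀ t, σ t = t) ∨ (∀ t, σ t = starRingEnd ℂ t) := by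
  have hr : ∀ r : ℝ, (σ r).im = 0 := by
    intro r
    rw [← Complex.conj_eq_iff_im, ← hc, Complex.conj_ofReal]
  have hr' : ∀ r : ℝ, σ r = ((σ r).re : ℂ) := by
    intro r; apply Complex.ext <;> simp [hr]
  let τ : ℝ →+* ℝ :=
    { toFun := fun r => (σ r).re
      map_one' := by simp
      map_zero' := by simp
      map_add' := by intro a b; simp
      map_mul' := by intro a b; simp [hr] }
  have hτ : ∀ r : ℝ, σ r = r := by
    intro r
    have : τ r = r := by
      have : τ = RingHom.id ℝ := Subsingleton.elim _ _
      rw [this]; rfl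
    rw [hr' r]; exact congrArg _ this
  have hI : σ Complex.I = Complex.I ∨ σ Complex.I = -Complex.I := by
    have : σ Complex.I * σ Complex.I = Complex.I * Complex.I := by
      rw [← map_mul, Complex.I_mul_I]; simp
    exact mul_self_eq_mul_self_iff.mp this
  rcases hI with hI | hI
  · left; intro t
    conv_lhs => rw [← Complex.re_add_im t]
    rw [map_add, map_mul, hτ, hτ, hI, Complex.re_add_im]
  · right; intro t
    conv_lhs => rw [← Complex.re_add_im t]
    rw [map_add, map_mul, hτ, hτ, hI]
    apply Complex.ext <;> simp

lemma mk_unitary (T : H → H) (hT : ∀ x y, inner ℂ (T x) (T y) = inner ℂ x y)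
    (hs : Function.Surjective T) : ∃ U : H ≃ₗᵢ[ℂ] H, ∀ x, U x = T x := by
  have hadd : ∀ x y, T (x + y) = T x + T y := by
    intro x y
    rw [← sub_eq_zero, ← inner_self_eq_zero (𝕜 := ℂ)]
    simp only [inner_sub_left, inner_sub_right, inner_add_left, inner_add_right, hT]
    ring
  have hsmul : ∀ (c : ℂ) x, T (c • x) = c • T x := by
    intro c x
    rw [← sub_eq_zero, ← inner_self_eq_zero (𝕜 := ℂ)]
    simp only [inner_sub_left, inner_sub_right, inner_smul_left, inner_smul_right, hT]
    ring
  let L : H →ₗᵢ[ℂ] H :=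
    { toFun := T, map_add' := hadd, map_smul' := hsmul
      norm_map' := by
        intro x
        change ‖T x‖ = ‖x‖
        rw [norm_eq_sqrt_re_inner (𝕜 := ℂ), norm_eq_sqrt_re_inner (𝕜 := ℂ), hT] }
  exact ⟨LinearIsometryEquiv.ofSurjective L hs, fun x => rfl⟩

lemma mk_antiunitary (T : H → H) (hT : ∀ x y, inner ℂ (T x) (T y) = starRingEnd ℂ (inner ℂ x y))
    (hs : Function.Surjective T) : ∃ U : H ≃ₗᵢ⋆[ℂ] H, ∀ x, U x = T x := by
  have hadd : ∀ x y, T (x + y) = T x + T y := by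
    intro x y
    rw [← sub_eq_zero, ← inner_self_eq_zero (𝕜 := ℂ)]
    simp only [inner_sub_left, inner_sub_right, inner_add_left, inner_add_right, hT, map_add]
    ring
  have hsmul : ∀ (c : ℂ) x, T (c • x) = (starRingEnd ℂ c) • T x := by
    intro c x
    rw [← sub_eq_zero, ← inner_self_eq_zero (𝕜 := ℂ)]
    simp only [inner_sub_left, inner_sub_right, inner_smul_left, inner_smul_right, hT, map_mul,
      Complex.conj_conj]
    ring
  let L : H →ₛₗᵢ[starRingEnd ℂ] H :=
    { toFun := T, map_add' := hadd, map_smul' := hsmul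
      norm_map' := by
        intro x
        change ‖T x‖ = ‖x‖
        rw [norm_eq_sqrt_re_inner (𝕜 := ℂ), norm_eq_sqrt_re_inner (𝕜 := ℂ), hT]; simp }
  exact ⟨LinearIsometryEquiv.ofSurjective L hs, fun x => rfl⟩

/-- existence of the normalized map on `e^⊥` -/
lemma uhl_L (hH : ¬FiniteDimensional ℂ H) (φ : H → H)
    (hort : ∀ x y, inner ℂ x y = 0 ↔ inner ℂ (φ x) (φ y) = 0)
    (hsurj : ∀ y, ∃ x, ∃ t : ℂ, y = t • φ x) :
    ∃ (e e' : H) (L : H → H), inner ℂ e e = (1 : ℂ) ∧ inner ℂ e' e' = (1 : ℂ) ∧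
      (∃ t : ℂ, e' = t • φ e) ∧
      (∀ v, inner ℂ e v = 0 → inner ℂ e' (L v) = 0 ∧ (∃ t : ℂ, e' + L v = t • φ (e + v)) ∧
        (∃ t : ℂ, t • φ v = L v)) ∧
      (∀ v w, inner ℂ e v = 0 → inner ℂ e w = 0 →
        (inner ℂ v w = -1 → inner ℂ (L v) (L w) = -1)) := by
  obtain ⟨e, he, -⟩ := exists_perp3 hH (0 : H) 0 0
  have hee : inner ℂ e e = (1 : ℂ) := by
    rw [inner_self_eq_norm_sq_to_K, he]; simp
  have hφe : φ e ≠ 0 := by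
    intro h
    have := (hort e e).2 (by simp [h])
    rw [hee] at this; exact one_ne_zero this
  have hn : (‖φ e‖ : ℂ) ≠ 0 := by simpa using hφe
  set e' : H := (‖φ e‖⁻¹ : ℂ) • φ e with he'
  have hφee : φ e = (‖φ e‖ : ℂ) • e' := by
    rw [he', smul_smul, mul_inv_cancel₀ hn, one_smul]
  have hee' : inner ℂ e' e' = (1 : ℂ) := by
    rw [he', inner_smul_left, inner_smul_right, inner_self_eq_norm_sq_to_K]
    simp; field_simp
  have hperp : ∀ x, inner ℂ e x = 0 ↔ inner ℂ e' (φ x) = 0 := by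
    intro x
    rw [hort, he', inner_smul_left, mul_eq_zero]
    simp [hφe]
  have hne : ∀ v, inner ℂ e v = 0 → inner ℂ e' (φ (e + v)) ≠ 0 := by
    intro v hv h
    rw [← hperp, inner_add_right, hee, hv] at h
    simp at h
  refine ⟨e, e', fun v => (inner ℂ e' (φ (e + v)))⁻¹ • φ (e + v) - e', hee, hee', ⟨_, rfl⟩, ?_, ?_⟩
  · intro v hv
    have h1 := hne v hv
    have hp : inner ℂ e' ((inner ℂ e' (φ (e + v)))⁻¹ • φ (e + v) - e') = 0 := by
      rw [inner_sub_right, inner_smul_right, inv_mul_cancel₀ h1, hee', sub_self]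
    refine ⟨hp, ⟨(inner ℂ e' (φ (e + v)))⁻¹, by simp⟩, ?_⟩
    obtain ⟨a, b, hab⟩ := uhl_comb φ hort hsurj e v 1 1
    rw [one_smul, one_smul] at hab
    have hv' := (hperp v).1 hv
    change ∃ t : ℂ, t • φ v = (inner ℂ e' (φ (e + v)))⁻¹ • φ (e + v) - e'
    generalize (inner ℂ e' (φ (e + v)))⁻¹ = s at hp ⊢
    rw [← hab] at hp ⊢
    rw [inner_sub_right, inner_smul_right, inner_add_right, inner_smul_right, inner_smul_right, hv',
      hφee, inner_smul_right, hee'] at hp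
    refine ⟨s * b, ?_⟩
    have : s * (a * (‖φ e‖ : ℂ)) = 1 := by linear_combination hp
    rw [smul_add, smul_smul, smul_smul]
    conv_rhs => rw [hφee, smul_smul, mul_assoc, this]
    simp
  · intro v w hv hw h
    have h1 : inner ℂ (e + v) (e + w) = 0 := by
      rw [inner_add_left, inner_add_right, inner_add_right, hee, hw, h,
        inner_eq_zero_symm.1 hv]; simp
    rw [hort] at h1
    have hA : ∀ v, inner ℂ e v = 0 →
        inner ℂ e' ((inner ℂ e' (φ (e + v)))⁻¹ • φ (e + v)) = 1 := by
      intro v hv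
      rw [inner_smul_right, inv_mul_cancel₀ (hne v hv)]
    have hB : ∀ v, inner ℂ e v = 0 →
        inner ℂ ((inner ℂ e' (φ (e + v)))⁻¹ • φ (e + v)) e' = 1 := by
      intro v hv
      rw [← inner_conj_symm, hA v hv, map_one]
    rw [inner_sub_left, inner_sub_right, inner_sub_right, hB v hv, hA w hw, hee',
      inner_smul_left, inner_smul_right, h1]
    simp

theorem uhlhorn (hH : ¬FiniteDimensional ℂ H) (φ : H → H)
    (hort : ∀ x y, inner ℂ x y = 0 ↔ inner ℂ (φ x) (φ y) = 0)
    (hsurj : ∀ y, ∃ x, ∃ t : ℂ, y = t • φ x) :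
    (∃ U : H ≃ₗᵢ[ℂ] H, ∀ x, ∃ t : ℂ, U x = t • φ x) ∨
    (∃ U : H ≃ₗᵢ⋆[ℂ] H, ∀ x, ∃ t : ℂ, U x = t • φ x) := by
  obtain ⟨e, e', L, hee, hee', he', hL, hL1⟩ := uhl_L hH φ hort hsurj
  have hesm : ∀ (t : ℂ) v, inner ℂ e v = 0 → inner ℂ e (t • v) = 0 := by
    intro t v hv; rw [inner_smul_right, hv, mul_zero]
  have headd : ∀ v w, inner ℂ e v = 0 → inner ℂ e w = 0 → inner ℂ e (v + w) = 0 := by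
    intro v w hv hw; rw [inner_add_right, hv, hw, add_zero]
  have hφ0 : φ 0 = 0 := by
    have := (hort 0 0).1 (by simp)
    simpa using this
  have hL0 : L 0 = 0 := by
    obtain ⟨-, -, t, ht⟩ := hL 0 (by simp)
    rw [← ht, hφ0, smul_zero]
  have hLne : ∀ v, inner ℂ e v = 0 → v ≠ 0 → L v ≠ 0 := by
    intro v hv hv0 h
    have h1 : inner ℂ v v ≠ (0 : ℂ) := by simpa using hv0
    have := hL1 v ((-(inner ℂ v v)⁻¹ : ℂ) • v) hv (hesm _ _ hv) (by
      rw [inner_smul_right]; field_simp)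
    simp [h] at this
  have hLort : ∀ v w, inner ℂ e v = 0 → inner ℂ e w = 0 → inner ℂ v w = 0 →
      inner ℂ (L v) (L w) = 0 := by
    intro v w hv hw h
    obtain ⟨-, -, t, ht⟩ := hL v hv
    obtain ⟨-, -, s, hs⟩ := hL w hw
    rw [← ht, ← hs, inner_smul_left, inner_smul_right, (hort v w).1 h]; simp
  -- collinearity: L (t • v) is a multiple of L v
  have hcol : ∀ v, inner ℂ e v = 0 → ∀ t : ℂ, ∃ s : ℂ, L (t • v) = s • L v := by
    intro v hv t
    by_cases hv0 : v = 0
    · subst hv0; exact ⟨0, by simp [hL0]⟩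
    obtain ⟨-, -, a, ha⟩ := hL v hv
    obtain ⟨-, -, b, hb⟩ := hL (t • v) (hesm t v hv)
    obtain ⟨c, d, hcd⟩ := uhl_comb φ hort hsurj v 0 t 0
    have ha0 : a ≠ 0 := by
      rintro rfl
      exact hLne v hv hv0 (by rw [← ha, zero_smul])
    rw [hφ0] at hcd
    simp only [smul_zero, add_zero] at hcd
    refine ⟨b * c * a⁻¹, ?_⟩
    rw [← ha, ← hb, ← hcd, smul_smul, smul_smul, mul_assoc, inv_mul_cancel₀ ha0, mul_one]
  -- additivity on orthogonal vectors
  have hadd : ∀ v w, inner ℂ e v = 0 → inner ℂ e w = 0 → inner ℂ v w = 0 →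
      L (v + w) = L v + L w := by
    intro v w hv hw h
    by_cases hv0 : v = 0
    · simp [hv0, hL0]
    by_cases hw0 : w = 0
    · simp [hw0, hL0]
    have key : ∀ v w, inner ℂ e v = 0 → inner ℂ e w = 0 → inner ℂ v w = 0 →
        ∃ β : ℂ, L (v + w) = L v + β • φ w := by
      intro v w hv hw h
      obtain ⟨h1, ⟨t, ht⟩, -⟩ := hL v hv
      obtain ⟨h2, ⟨s, hs⟩, -⟩ := hL (v + w) (headd _ _ hv hw)
      obtain ⟨a, b, hab⟩ := uhl_comb φ hort hsurj (e + v) w 1 1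
      rw [one_smul, one_smul, add_assoc] at hab
      have ht0 : t ≠ 0 := by
        rintro rfl
        have : inner ℂ e' (e' + L v) = 0 := by rw [ht]; simp
        rw [inner_add_right, h1, hee'] at this; simp at this
      have hφ : φ (e + v) = t⁻¹ • (e' + L v) := by
        rw [ht, smul_smul, inv_mul_cancel₀ ht0, one_smul]
      have hw' : inner ℂ e' (φ w) = 0 := by
        obtain ⟨r, hr⟩ := he'
        rw [hr, inner_smul_left, (hort e w).1 hw, mul_zero]
      rw [← hab, hφ, smul_add, smul_smul, smul_smul, smul_smul] at hs
      have h3 : inner ℂ e' (e' + L (v + w)) = s * (a * t⁻¹) := by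
        rw [hs, inner_add_right, inner_smul_right, inner_smul_right, inner_add_right, h1, hee', hw']
        ring
      rw [inner_add_right, hee', h2, add_zero] at h3
      rw [← mul_assoc] at h3
      rw [← h3, one_smul, add_assoc] at hs
      exact ⟨s * b, add_left_cancel hs⟩
    obtain ⟨β, hβ⟩ := key v w hv hw h
    obtain ⟨α, hα⟩ := key w v hw hv (inner_eq_zero_symm.1 h)
    rw [add_comm w v] at hα
    have hvw := (hort v w).1 h
    have h1 : inner ℂ (φ w) (L v) = 0 := by
      obtain ⟨-, -, t, ht⟩ := hL v hv
      rw [← ht, inner_smul_right, inner_eq_zero_symm.1 hvw, mul_zero]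
    have h2 : inner ℂ (φ w) (β • φ w - L w) = 0 := by
      have : L v + β • φ w = L w + α • φ v := hβ.symm.trans hα
      have h3 : β • φ w - L w = α • φ v - L v := by
        rw [sub_eq_sub_iff_add_eq_add, add_comm, this, add_comm]
      rw [h3, inner_sub_right, h1, inner_smul_right, inner_eq_zero_symm.1 hvw]; simp
    have h4 : β • φ w - L w = 0 := by
      obtain ⟨-, -, t, ht⟩ := hL w hw
      rw [← ht, ← sub_smul] at h2 ⊢
      rw [inner_smul_right, mul_eq_zero] at h2
      rcases h2 with h2 | h2
      · rw [h2, zero_smul]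
      · rw [inner_self_eq_zero.1 h2, smul_zero]
    rw [hβ, sub_eq_zero.1 h4]
  obtain ⟨v0, hv0, hev0, -⟩ := exists_perp3 hH e 0 0
  obtain ⟨v1, hv1, hev1, hv01, -⟩ := exists_perp3 hH e v0 0
  have hne0 : v0 ≠ 0 := by rintro rfl; simp at hv0
  have hne1 : v1 ≠ 0 := by rintro rfl; simp at hv1
  have hvv0 : inner ℂ v0 v0 = (1 : ℂ) := by rw [inner_self_eq_norm_sq_to_K, hv0]; simp
  have hvv1 : inner ℂ v1 v1 = (1 : ℂ) := by rw [inner_self_eq_norm_sq_to_K, hv1]; simp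
  choose σ hσ using hcol v0 hev0
  -- orthogonal transfer
  have htr : ∀ v w, inner ℂ e v = 0 → inner ℂ e w = 0 → inner ℂ v w = 0 → v ≠ 0 → w ≠ 0 →
      ∀ t s : ℂ, L (t • v) = s • L v → L (t • w) = s • L w := by
    intro v w hv hw h hv0 hw0 t s hs
    obtain ⟨r, hr⟩ := hcol w hw t
    obtain ⟨q, hq⟩ := hcol (v + w) (headd _ _ hv hw) t
    rw [smul_add, hadd (t • v) (t • w) (hesm _ _ hv) (hesm _ _ hw)
      (by rw [inner_smul_left, inner_smul_right, h]; simp), hadd v w hv hw h, hs, hr, smul_add] at hq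
    have hvw := hLort v w hv hw h
    have h1 := congrArg (fun z => inner ℂ (L v) z) hq
    have h2 := congrArg (fun z => inner ℂ (L w) z) hq
    simp only [inner_add_right, inner_smul_right, hvw, inner_eq_zero_symm.1 hvw, mul_zero,
      add_zero, zero_add] at h1 h2
    have h3 : inner ℂ (L v) (L v) ≠ (0 : ℂ) := by simpa using hLne v hv hv0
    have h4 : inner ℂ (L w) (L w) ≠ (0 : ℂ) := by simpa using hLne w hw hw0
    rw [hr, mul_right_cancel₀ h3 h1, mul_right_cancel₀ h4 h2]
  have hsm : ∀ v, inner ℂ e v = 0 → ∀ t : ℂ, L (t • v) = σ t • L v := by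
    intro v hv t
    by_cases h0 : v = 0
    · subst h0; simp [hL0]
    obtain ⟨z, hz, hez, hz0, hzv⟩ := exists_perp3 hH e v0 v
    have hzne : z ≠ 0 := by rintro rfl; simp at hz
    exact htr z v hez hv (inner_eq_zero_symm.1 hzv) hzne h0 t _
      (htr v0 z hev0 hez hz0 hne0 hzne t _ (hσ t))
  have hLv0 : L v0 ≠ 0 := hLne _ hev0 hne0
  have hLv00 : inner ℂ (L v0) (L v0) ≠ (0 : ℂ) := by simpa using hLv0
  have hσ1 : σ 1 = 1 := by
    have := hσ 1
    rw [one_smul] at this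
    have h2 : (σ 1 - 1) • L v0 = 0 := by rw [sub_smul, ← this, one_smul, sub_self]
    rcases smul_eq_zero.1 h2 with h | h
    · exact sub_eq_zero.1 h
    · exact absurd h hLv0
  have hσmul : ∀ s t, σ (s * t) = σ s * σ t := by
    intro s t
    have h1 := hσ (s * t)
    rw [← smul_smul, hsm _ (hesm t v0 hev0), hσ, smul_smul] at h1
    exact (smul_left_injective ℂ hLv0 h1).symm
  have hσ0 : σ 0 = 0 := by
    have h1 := hσ 0
    rw [zero_smul, hL0] at h1
    rcases smul_eq_zero.1 h1.symm with h | h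
    · exact h
    · exact absurd h hLv0
  have hσadd : ∀ s t, σ (s + t) = σ s + σ t := by
    intro s t
    have hv10 := inner_eq_zero_symm.1 hv01
    have hLo := hLort _ _ hev0 hev1 hv01
    have hlin : ∀ a b : ℂ, L (a • v0 + b • v1) = σ a • L v0 + σ b • L v1 := by
      intro a b
      rw [hadd _ _ (hesm _ _ hev0) (hesm _ _ hev1)
        (by rw [inner_smul_left, inner_smul_right, hv01]; simp), hsm _ hev0, hsm _ hev1]
    have h1 := hadd (s • v0 + (1 : ℂ) • v1) (t • v0 + (-(starRingEnd ℂ s * t)) • v1)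
      (headd _ _ (hesm _ _ hev0) (hesm _ _ hev1)) (headd _ _ (hesm _ _ hev0) (hesm _ _ hev1))
      (by
        simp only [inner_add_left, inner_add_right, inner_smul_left, inner_smul_right, hvv0, hvv1,
          hv01, hv10]
        simp only [map_one]
        ring)
    have h2 : s • v0 + (1 : ℂ) • v1 + (t • v0 + (-(starRingEnd ℂ s * t)) • v1) =
      (s + t) • v0 + (1 + -(starRingEnd ℂ s * t)) • v1 := by module
    rw [h2, hlin, hlin, hlin] at h1
    have h3 := congrArg (fun z => inner ℂ (L v0) z) h1
    simp only [inner_add_right, inner_smul_right, hLo, mul_zero, add_zero] at h3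
    rw [← add_mul] at h3
    exact mul_right_cancel₀ hLv00 h3
  let S : ℂ →+* ℂ :=
    { toFun := σ, map_one' := hσ1, map_zero' := hσ0, map_mul' := hσmul, map_add' := hσadd }
  have hS : ∀ t, S t = σ t := fun _ => rfl
  have hin : ∀ v w, inner ℂ e v = 0 → inner ℂ e w = 0 →
      inner ℂ (L v) (L w) = S (inner ℂ v w) := by
    intro v w hv hw
    by_cases h : inner ℂ v w = 0
    · rw [h, map_zero, hLort v w hv hw h]
    have h1 := hL1 v ((-(inner ℂ v w)⁻¹ : ℂ) • w) hv (hesm _ _ hw) (by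
      rw [inner_smul_right]; field_simp)
    rw [hsm _ hw, inner_smul_right, ← hS, map_neg, map_inv₀] at h1
    have h2 : S (inner ℂ v w) ≠ 0 := by simpa using h
    field_simp at h1
    linear_combination -h1
  have hconj : ∀ t, S (starRingEnd ℂ t) = starRingEnd ℂ (S t) := by
    intro t
    have h1 := hin (t • v0) v0 (hesm _ _ hev0) hev0
    rw [hsm _ hev0, inner_smul_left, inner_smul_left, hin _ _ hev0 hev0, hvv0, mul_one, map_one,
      mul_one] at h1
    exact h1.symm
  let T : H → H := fun x => S (inner ℂ e x) • e' + L (x - inner ℂ e x • e)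
  have hx : ∀ x, inner ℂ e (x - inner ℂ e x • e) = 0 := by
    intro x; rw [inner_sub_right, inner_smul_right, hee]; ring
  have hT : ∀ x y, inner ℂ (T x) (T y) = S (inner ℂ x y) := by
    intro x y
    have h1 := (hL _ (hx x)).1
    have h2 := (hL _ (hx y)).1
    have h3 : inner ℂ x y = starRingEnd ℂ (inner ℂ e x) * inner ℂ e y
        + inner ℂ (x - inner ℂ e x • e) (y - inner ℂ e y • e) := by
      rw [inner_sub_left, inner_smul_left, hx y, inner_sub_right, inner_smul_right,
        inner_conj_symm x e]
      ring
    simp only [T]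
    rw [inner_add_left, inner_add_right, inner_add_right, inner_smul_left, inner_smul_left,
      inner_smul_right, inner_smul_right, hee', h2, inner_eq_zero_symm.1 h1, hin _ _ (hx x) (hx y)]
    rw [h3, map_add, map_mul, hconj]
    ring
  have hTφ : ∀ x, ∃ t : ℂ, T x = t • φ x := by
    intro x
    by_cases h0 : inner ℂ e x = 0
    · obtain ⟨-, -, t, ht⟩ := hL x h0
      refine ⟨t, ?_⟩
      simp [T, h0, ht]
    · set s := inner ℂ e x
      have hs0 : S s ≠ 0 := by simpa using h0
      have h1 := hx x
      obtain ⟨-, ⟨t, ht⟩, -⟩ := hL (s⁻¹ • (x - s • e)) (hesm _ _ h1)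
      have h2 : e + s⁻¹ • (x - s • e) = s⁻¹ • x := by
        rw [smul_sub, smul_smul, inv_mul_cancel₀ h0, one_smul]; abel
      obtain ⟨c, d, hcd⟩ := uhl_comb φ hort hsurj x 0 s⁻¹ 0
      rw [hφ0] at hcd
      simp only [smul_zero, add_zero] at hcd
      rw [h2, ← hcd, hsm _ h1, ← hS, map_inv₀] at ht
      refine ⟨S s * (t * c), ?_⟩
      rw [mul_smul, mul_smul, ← ht, smul_add, smul_smul, mul_inv_cancel₀ hs0, one_smul]
  rcases ringhom_complex S hconj with hid | hcj
  · left
    have hT' : ∀ x y, inner ℂ (T x) (T y) = inner ℂ x y := by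
      intro x y; rw [hT, hid]
    obtain ⟨U, hU⟩ := mk_unitary T hT' (by
      intro y
      by_cases hy : y = 0
      · refine ⟨0, ?_⟩
        have := hT' 0 0
        rw [inner_zero_left, inner_self_eq_zero] at this
        rw [this, hy]
      obtain ⟨x, t, rfl⟩ := hsurj y
      have ht : t ≠ 0 := by rintro rfl; simp at hy
      have hφx : φ x ≠ 0 := by intro h; simp [h] at hy
      obtain ⟨s, hs⟩ := hTφ x
      have hs0 : s ≠ 0 := by
        rintro rfl
        have := hT' x x
        rw [hs, zero_smul, inner_zero_left] at this
        have : x = 0 := inner_self_eq_zero.1 this.symm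
        exact hφx (by rw [this, hφ0])
      refine ⟨(t * s⁻¹) • x, ?_⟩
      have h1 : T ((t * s⁻¹) • x) = (t * s⁻¹) • T x := by
        rw [← sub_eq_zero, ← inner_self_eq_zero (𝕜 := ℂ)]
        simp only [inner_sub_left, inner_sub_right, inner_smul_left, inner_smul_right, hT']
        ring
      rw [h1, hs, smul_smul, mul_assoc, inv_mul_cancel₀ hs0, mul_one])
    exact ⟨U, fun x => by rw [hU]; exact hTφ x⟩
  · right
    have hT' : ∀ x y, inner ℂ (T x) (T y) = starRingEnd ℂ (inner ℂ x y) := by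
      intro x y; rw [hT, hcj]
    obtain ⟨U, hU⟩ := mk_antiunitary T hT' (by
      intro y
      by_cases hy : y = 0
      · refine ⟨0, ?_⟩
        have := hT' 0 0
        rw [inner_zero_left, map_zero, inner_self_eq_zero] at this
        rw [this, hy]
      obtain ⟨x, t, rfl⟩ := hsurj y
      have ht : t ≠ 0 := by rintro rfl; simp at hy
      have hφx : φ x ≠ 0 := by intro h; simp [h] at hy
      obtain ⟨s, hs⟩ := hTφ x
      have hs0 : s ≠ 0 := by
        rintro rfl
        have := hT' x x
        rw [hs, zero_smul, inner_zero_left] at this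
        have : x = 0 := inner_self_eq_zero.1 ((map_eq_zero _).1 this.symm)
        exact hφx (by rw [this, hφ0])
      refine ⟨(starRingEnd ℂ (t * s⁻¹)) • x, ?_⟩
      have h1 : T ((starRingEnd ℂ (t * s⁻¹)) • x) = (t * s⁻¹) • T x := by
        rw [← sub_eq_zero, ← inner_self_eq_zero (𝕜 := ℂ)]
        simp only [inner_sub_left, inner_sub_right, inner_smul_left, inner_smul_right, hT', map_mul,
          Complex.conj_conj]
        ring
      rw [h1, hs, smul_smul, mul_assoc, inv_mul_cancel₀ hs0, mul_one])
    exact ⟨U, fun x => by rw [hU]; exact hTφ x⟩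

section lattice
variable {α : Type*} [Lattice α] [IsModularLattice α]

def AdjL (X Y : α) : Prop := X ⊓ Y ⋖ X ∧ X ⊓ Y ⋖ Y

lemma AdjL.symm {X Y : α} (h : AdjL X Y) : AdjL Y X := by
  unfold AdjL at *; rw [inf_comm]; exact h.symm

lemma AdjL.ne {X Y : α} (h : AdjL X Y) : X ≠ Y := by
  rintro rfl
  have := h.1.lt
  simp at this

lemma AdjL.not_le {X Y : α} (h : AdjL X Y) : ¬ X ≤ Y := by
  intro hle
  have := h.1.lt
  rw [inf_eq_left.2 hle] at this
  exact lt_irrefl _ this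

lemma AdjL.sup_left {X Y : α} (h : AdjL X Y) : X ⋖ X ⊔ Y := covBy_sup_of_inf_covBy_right h.2
lemma AdjL.sup_right {X Y : α} (h : AdjL X Y) : Y ⋖ X ⊔ Y := covBy_sup_of_inf_covBy_left h.1

lemma cov_eq {A B X : α} (hA : A ⋖ X) (hAB : A ≤ B) (hB : B ≤ X) (hne : B ≠ X) : B = A :=
  (hA.eq_or_eq hAB hB).resolve_right hne

lemma cov_below {A X Y : α} (hX : A ⋖ X) (hY : A ⋖ Y) (hne : X ≠ Y) : X ⊓ Y = A ∧ AdjL X Y := by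
  have h : X ⊓ Y = A := by
    apply cov_eq hX (le_inf hX.le hY.le) inf_le_left
    intro h
    have hXY : X ≤ Y := inf_eq_left.1 h
    rcases hY.eq_or_eq hX.le hXY with h | h
    · exact hX.ne h.symm
    · exact hne h
  exact ⟨h, by unfold AdjL; rw [h]; exact ⟨hX, hY⟩⟩

lemma cov_above {V X Y : α} (hX : X ⋖ V) (hY : Y ⋖ V) (hne : X ≠ Y) : X ⊔ Y = V ∧ AdjL X Y := by
  have h : X ⊔ Y = V := by
    rcases hX.eq_or_eq le_sup_left (sup_le hX.le hY.le) with h | h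
    · have hYX : Y ≤ X := sup_eq_left.1 h
      rcases hY.eq_or_eq hYX hX.le with h | h
      · exact absurd h hne
      · exact absurd h hX.ne
    · exact h
  subst h
  refine ⟨rfl, ?_, ?_⟩
  · exact inf_covBy_of_covBy_sup_right hY
  · exact inf_covBy_of_covBy_sup_left hX

lemma AdjL.inf_eq {A X Z : α} (h : AdjL X Z) (hA : A ⋖ X) (hZ : A ≤ Z) : X ⊓ Z = A ∧ A ⋖ Z := by
  have : X ⊓ Z = A := cov_eq hA (le_inf hA.le hZ) inf_le_left h.1.ne
  exact ⟨this, this ▸ h.2⟩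

lemma AdjL.sup_eq {V X Z : α} (h : AdjL X Z) (hV : X ⋖ V) (hZ : Z ≤ V) : X ⊔ Z = V ∧ Z ⋖ V := by
  have : X ⊔ Z = V := (hV.eq_or_eq le_sup_left (sup_le hV.le hZ)).resolve_left h.sup_left.ne'
  exact ⟨this, this ▸ h.sup_right⟩

lemma adj_or {X Y Z : α} (hXY : AdjL X Y) (hXZ : AdjL X Z) (hYZ : AdjL Y Z) :
    X ⊓ Y ≤ Z ∨ Z ≤ X ⊔ Y := by
  by_cases h : X ⊓ Z = Y ⊓ Z
  · left
    have h1 : X ⊓ Z ≤ X ⊓ Y := le_inf inf_le_left (h ▸ inf_le_left)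
    have h2 : X ⊓ Y = X ⊓ Z := cov_eq hXZ.1 h1 inf_le_left hXY.1.ne
    rw [h2]; exact inf_le_right
  · right
    have := (cov_above hXZ.2 hYZ.2 h).1
    rw [← this]
    exact sup_le (inf_le_left.trans le_sup_left) (inf_le_left.trans le_sup_right)

lemma clique_or (F : Set α) (hF : ∀ X ∈ F, ∀ Y ∈ F, X ≠ Y → AdjL X Y) {X1 X2 : α}
    (h1 : X1 ∈ F) (h2 : X2 ∈ F) (hne : X1 ≠ X2) :
    (∀ Z ∈ F, X1 ⊓ X2 ⋖ Z) ∨ (∀ Z ∈ F, Z ⋖ X1 ⊔ X2) := by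
  have h12 := hF _ h1 _ h2 hne
  by_contra hcon
  push Not at hcon
  obtain ⟨⟨Z1, hZ1, hn1⟩, Z2, hZ2, hn2⟩ := hcon
  have a11 : X1 ≠ Z1 := by rintro rfl; exact hn1 h12.1
  have a21 : X2 ≠ Z1 := by rintro rfl; exact hn1 h12.2
  have a12 : X1 ≠ Z2 := by rintro rfl; exact hn2 h12.sup_left
  have a22 : X2 ≠ Z2 := by rintro rfl; exact hn2 h12.sup_right
  have b11 := hF _ h1 _ hZ1 a11
  have b21 := hF _ h2 _ hZ1 a21
  have b12 := hF _ h1 _ hZ2 a12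
  have b22 := hF _ h2 _ hZ2 a22
  have c1 : Z1 ≤ X1 ⊔ X2 := by
    rcases adj_or h12 b11 b21 with h | h
    · exact absurd (b11.inf_eq h12.1 h).2 hn1
    · exact h
  have c2 : X1 ⊓ X2 ≤ Z2 := by
    rcases adj_or h12 b12 b22 with h | h
    · exact h
    · exact absurd (b12.sup_eq h12.sup_left h).2 hn2
  have c2' : X1 ⊓ X2 ⋖ Z2 := (b12.inf_eq h12.1 c2).2
  have hne' : Z1 ≠ Z2 := by rintro rfl; exact hn1 c2'
  have hz := hF _ hZ1 _ hZ2 hne'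
  have d : (X1 ⊔ X2) ⊓ Z2 = X1 ⊓ X2 := by
    apply cov_eq c2' (le_inf (inf_le_left.trans le_sup_left) c2) inf_le_right
    intro h
    exact hn2 (b12.sup_eq h12.sup_left (inf_eq_right.1 h)).2
  have e : Z1 ⊓ Z2 ≤ X1 ⊓ X2 := by rw [← d]; exact inf_le_inf_right _ c1
  have e' : X1 ⊓ X2 = Z1 ⊓ Z2 := cov_eq hz.2 e c2 c2'.ne
  exact hn1 (b11.inf_eq h12.1 (e' ▸ inf_le_left)).2

lemma star3 {W X1 X2 X3 Y : α} (h1 : W ⋖ X1) (h2 : W ⋖ X2) (h3 : W ⋖ X3) (h12 : X1 ≠ X2)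
    (hn : ¬ X3 ≤ X1 ⊔ X2) (y1 : Y = X1 ∨ AdjL Y X1) (y2 : Y = X2 ∨ AdjL Y X2)
    (y3 : Y = X3 ∨ AdjL Y X3) : W ≤ Y := by
  rcases y1 with rfl | y1
  · exact h1.le
  rcases y2 with rfl | y2
  · exact h2.le
  rcases y3 with rfl | y3
  · exact h3.le
  have h13 : X1 ≠ X3 := by rintro rfl; exact hn le_sup_left
  obtain ⟨i12, a12⟩ := cov_below h1 h2 h12
  obtain ⟨i13, a13⟩ := cov_below h1 h3 h13
  rcases adj_or a12 y1.symm y2.symm with h | h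
  · exact i12 ▸ h
  rcases adj_or a13 y1.symm y3.symm with h' | h'
  · exact i13 ▸ h'
  exfalso
  have : (X1 ⊔ X3) ⊓ (X1 ⊔ X2) = X1 := by
    apply cov_eq a13.sup_left (le_inf le_sup_left le_sup_left) inf_le_left
    intro h
    exact hn (le_sup_right.trans (inf_eq_left.1 h))
  exact y1.not_le (this ▸ le_inf h' h)

lemma top3 {V X1 X2 X3 Y : α} (h1 : X1 ⋖ V) (h2 : X2 ⋖ V) (h3 : X3 ⋖ V) (h12 : X1 ≠ X2)
    (hn : ¬ X1 ⊓ X2 ≤ X3) (y1 : Y = X1 ∨ AdjL Y X1) (y2 : Y = X2 ∨ AdjL Y X2)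
    (y3 : Y = X3 ∨ AdjL Y X3) : Y ≤ V := by
  rcases y1 with rfl | y1
  · exact h1.le
  rcases y2 with rfl | y2
  · exact h2.le
  rcases y3 with rfl | y3
  · exact h3.le
  have h13 : X1 ≠ X3 := by rintro rfl; exact hn inf_le_left
  obtain ⟨i12, a12⟩ := cov_above h1 h2 h12
  obtain ⟨i13, a13⟩ := cov_above h1 h3 h13
  rcases adj_or a12 y1.symm y2.symm with h | h
  swap
  · exact i12 ▸ h
  rcases adj_or a13 y1.symm y3.symm with h' | h'
  swap
  · exact i13 ▸ h'
  exfalso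
  have : (X1 ⊓ X3) ⊔ (X1 ⊓ X2) = X1 := by
    rcases a13.1.eq_or_eq (c := (X1 ⊓ X3) ⊔ (X1 ⊓ X2)) le_sup_left (sup_le inf_le_left inf_le_left) with h | h
    · exfalso; exact hn ((sup_eq_left.1 h).trans inf_le_right)
    · exact h
  exact y1.symm.not_le (this ▸ sup_le h' h)

end lattice


lemma codim_one_iff (W X : Submodule ℂ H) : CodimIn W X 1 ↔ W ⋖ X := by
  constructor
  · rintro ⟨hle, -, h⟩
    rw [covBy_iff_quot_is_simple hle, isSimpleModule_iff_finrank_eq_one]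
    exact h
  · intro h
    have h1 := h
    rw [covBy_iff_quot_is_simple h.le, isSimpleModule_iff_finrank_eq_one] at h1
    exact ⟨h.le, Module.finite_of_finrank_pos (by
      have h2 : finrank ℂ (↥X ⧸ W.comap X.subtype) = 1 := h1
      rw [h2]; exact one_pos), h1⟩

lemma adj_iff (X Y : Submodule ℂ H) : Adjacent X Y ↔ AdjL X Y := by
  unfold Adjacent AdjL
  rw [codim_one_iff, codim_one_iff]

lemma hop {K : Submodule ℂ H} (h : IsClosed (K : Set H)) : K.HasOrthogonalProjection :=
  haveI : CompleteSpace K := h.completeSpace_coe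
  inferInstance

lemma isClosed_inf {X Y : Submodule ℂ H} (hX : IsClosed (X : Set H)) (hY : IsClosed (Y : Set H)) :
    IsClosed ((X ⊓ Y : Submodule ℂ H) : Set H) := by
  rw [Submodule.coe_inf]; exact hX.inter hY

lemma perp_perp {K : Submodule ℂ H} (h : IsClosed (K : Set H)) : Kᗮᗮ = K := by
  have := hop h
  exact Submodule.orthogonal_orthogonal K

lemma mem_perp_span {x v : H} : v ∈ (ℂ ∙ x)ᗮ ↔ inner ℂ x v = 0 := Submodule.mem_orthogonal_singleton_iff_inner_right

lemma cov_sup {W : Submodule ℂ H} {x : H} (hx : x ∉ W) : W ⋖ W ⊔ ℂ ∙ x := by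
  rw [sup_comm]; exact covBy_span_singleton_sup hx

lemma not_mem_of_perp {W : Submodule ℂ H} {x : H} (hx : x ∈ Wᗮ) (h0 : x ≠ 0) : x ∉ W := by
  intro h
  exact h0 (inner_self_eq_zero.1 (hx x h))

lemma eq_sup_of_cov {W X : Submodule ℂ H} (h : W ⋖ X) {x : H} (hx : x ∈ X) (hxW : x ∉ W) :
    X = W ⊔ ℂ ∙ x := by
  have h1 : W ⊔ ℂ ∙ x ≤ X := sup_le h.le (by simpa using hx)
  rcases h.eq_or_eq le_sup_left h1 with h2 | h2
  · exfalso; apply hxW; rw [← h2]; exact le_sup_right (a := W) (mem_span_singleton_self x)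
  · exact h2.symm

lemma cov_form {W X : Submodule ℂ H} (hW : IsClosed (W : Set H)) (h : W ⋖ X) :
    ∃ x ∈ X, x ∈ Wᗮ ∧ x ≠ 0 ∧ X = W ⊔ ℂ ∙ x := by
  have := hop hW
  have h1 := Submodule.sup_orthogonal_inf_of_hasOrthogonalProjection h.le
  have h2 : Wᗮ ⊓ X ≠ ⊥ := by
    intro hb
    rw [hb, sup_bot_eq] at h1
    exact h.ne h1
  obtain ⟨x, hx, hx0⟩ := Submodule.exists_mem_ne_zero_of_ne_bot h2
  exact ⟨x, hx.2, hx.1, hx0, eq_sup_of_cov h hx.2 (not_mem_of_perp hx.1 hx0)⟩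

lemma closed_of_cov {W X : Submodule ℂ H} (hW : IsClosed (W : Set H)) (h : W ⋖ X) :
    IsClosed (X : Set H) := by
  obtain ⟨x, -, -, -, rfl⟩ := cov_form hW h
  exact Submodule.isClosed_sup_finiteDimensional _ _ hW

lemma perp_cov {W X : Submodule ℂ H} (hW : IsClosed (W : Set H)) (h : W ⋖ X) : Xᗮ ⋖ Wᗮ := by
  obtain ⟨x, hxX, hxW, hx0, hX⟩ := cov_form hW h
  have h1 : Wᗮ = Xᗮ ⊔ ℂ ∙ x := by
    apply le_antisymm
    · intro v hv
      have hxx : inner ℂ x x ≠ (0 : ℂ) := by simpa using hx0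
      have : v = (v - (inner ℂ x v / inner ℂ x x) • x) + (inner ℂ x v / inner ℂ x x) • x := by simp
      rw [this]
      apply Submodule.add_mem_sup
      · rw [hX, ← Submodule.inf_orthogonal]
        refine ⟨Submodule.sub_mem _ hv (Submodule.smul_mem _ _ hxW), ?_⟩
        change _ ∈ (ℂ ∙ x)ᗮ
        rw [mem_perp_span, inner_sub_right, inner_smul_right]
        field_simp; ring
      · exact Submodule.smul_mem _ _ (mem_span_singleton_self x)
    · exact sup_le (Submodule.orthogonal_le h.le) (by simpa using hxW)
  rw [h1]
  apply cov_sup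
  intro hx
  exact hx0 (inner_self_eq_zero.1 (hx x hxX))

lemma fin_cov {W X : Submodule ℂ H} (h : W ⋖ X) : FiniteDimensional ℂ W ↔ FiniteDimensional ℂ X := by
  constructor
  · intro hf
    obtain ⟨x, hx, hxW⟩ := SetLike.exists_of_lt h.lt
    rw [eq_sup_of_cov h hx hxW]
    infer_instance
  · intro hf
    exact Submodule.finiteDimensional_of_le h.le

lemma ginf_cov {W X : Submodule ℂ H} (hW : IsClosed (W : Set H)) (h : W ⋖ X) :
    W ∈ Ginf (H := H) ↔ X ∈ Ginf (H := H) := by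
  change (_ ∧ _ ∧ _) ↔ (_ ∧ _ ∧ _)
  rw [fin_cov h, fin_cov (perp_cov hW h)]
  simp [hW, closed_of_cov hW h]

def OA (X Y : Submodule ℂ H) : Prop := AdjL X Y ∧ X ⊓ (X ⊓ Y)ᗮ ≤ Yᗮ

lemma OA.symm {X Y : Submodule ℂ H} (hX : IsClosed (X : Set H)) (hY : IsClosed (Y : Set H))
    (h : OA X Y) : OA Y X := by
  refine ⟨h.1.symm, ?_⟩
  rw [inf_comm Y X]
  rintro y ⟨hy, hyW⟩
  have hW := isClosed_inf hX hY
  obtain ⟨x, hxX, hxW, hx0, hX'⟩ := cov_form hW h.1.1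
  rw [hX', ← Submodule.inf_orthogonal]
  refine ⟨hyW, ?_⟩
  change _ ∈ (ℂ ∙ x)ᗮ
  rw [mem_perp_span, inner_eq_zero_symm]
  exact h.2 ⟨hxX, hxW⟩ y hy

lemma projCLM_eq {K : Submodule ℂ H} (h : IsClosed (K : Set H)) :
    ∃ _ : K.HasOrthogonalProjection, projCLM K = K.starProjection := by
  refine ⟨hop h, ?_⟩
  unfold projCLM
  rw [dif_pos h]
  rfl

lemma oa_iff {X Y : Submodule ℂ H} (hX : IsClosed (X : Set H)) (hY : IsClosed (Y : Set H)) :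
    OrthoAdjacent X Y ↔ OA X Y := by
  unfold OrthoAdjacent OA
  rw [adj_iff]
  apply and_congr_right
  intro hadj
  obtain ⟨iX, eX⟩ := projCLM_eq hX
  obtain ⟨iY, eY⟩ := projCLM_eq hY
  unfold Compatible
  rw [eX, eY]
  have hW := isClosed_inf hX hY
  constructor
  · intro hc x hx
    rw [← Submodule.starProjection_apply_eq_zero_iff]
    have h1 : Y.starProjection x = X.starProjection (Y.starProjection x) := by
      have := congrArg (fun T : H →L[ℂ] H => T x) hc.eq
      simp only [mul_apply_eq_comp] at this
      rw [this, Submodule.starProjection_eq_self_iff.2 hx.1]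
    have h2 : Y.starProjection x ∈ X ⊓ Y :=
      ⟨by rw [h1]; exact Submodule.starProjection_apply_mem _ _, Submodule.starProjection_apply_mem _ _⟩
    have h3 := hx.2 _ h2
    rw [← inner_self_eq_zero (𝕜 := ℂ)]
    rw [← Submodule.inner_starProjection_left_eq_right,
      Submodule.starProjection_eq_self_iff.2 (Submodule.starProjection_apply_mem Y x)]
    exact h3
  · intro h
    have iW := hop hW
    have key : ∀ (X Y : Submodule ℂ H) [X.HasOrthogonalProjection] [Y.HasOrthogonalProjection]
        [(X ⊓ Y).HasOrthogonalProjection],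
        X ⊓ (X ⊓ Y)ᗮ ≤ Yᗮ → ∀ v, (X ⊓ Y).starProjection v = Y.starProjection (X.starProjection v) := by
      intro X Y _ _ _ h v
      symm
      apply (Submodule.eq_starProjection_of_mem_orthogonal ?_ ?_).symm
      · refine ⟨?_, Submodule.starProjection_apply_mem _ _⟩
        have h1 := Submodule.sup_orthogonal_inf_of_hasOrthogonalProjection
          (inf_le_left : X ⊓ Y ≤ X)
        have h2 := h1.ge (Submodule.starProjection_apply_mem X v)
        obtain ⟨w, hw, x, hx, hwx⟩ := Submodule.mem_sup.1 h2
        rw [← hwx, map_add, Submodule.starProjection_eq_self_iff.2 hw.2,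
          (Submodule.starProjection_apply_eq_zero_iff Y).2 (h ⟨hx.2, hx.1⟩), add_zero]
        exact hw.1
      · have h1 : v - X.starProjection v ∈ (X ⊓ Y)ᗮ :=
          Submodule.orthogonal_le inf_le_left (Submodule.sub_starProjection_mem_orthogonal v)
        have h2 : X.starProjection v - Y.starProjection (X.starProjection v) ∈ (X ⊓ Y)ᗮ :=
          Submodule.orthogonal_le inf_le_right (Submodule.sub_starProjection_mem_orthogonal _)
        have := Submodule.add_mem _ h1 h2
        simpa using this
    have h' := (OA.symm hX hY ⟨hadj, h⟩).2
    have iW' := hop (isClosed_inf hY hX)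
    ext v
    simp only [mul_apply_eq_comp]
    rw [← key X Y h v, ← key Y X h' v]
    congr 2
    simp only [inf_comm]

lemma cd_exact {A B C : Submodule ℂ H} (hAB : A ≤ B) (hBC : B ≤ C) :
    ∃ (ψ : (↥B ⧸ A.comap B.subtype) →ₗ[ℂ] (↥C ⧸ A.comap C.subtype))
      (χ : (↥C ⧸ A.comap C.subtype) →ₗ[ℂ] (↥C ⧸ B.comap C.subtype)),
      Function.Injective ψ ∧ Function.Surjective χ ∧ LinearMap.range ψ = LinearMap.ker χ := by
  let p := A.comap C.subtype
  let q := B.comap C.subtype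
  let r := A.comap B.subtype
  have h1 : r ≤ p.comap (inclusion hBC) := fun x hx => hx
  have h2 : p ≤ q := fun x hx => hAB hx
  refine ⟨r.mapQ p (inclusion hBC) h1, p.mapQ q LinearMap.id h2, ?_, ?_, ?_⟩
  · rw [← LinearMap.ker_eq_bot, LinearMap.ker_eq_bot']
    intro m
    obtain ⟨b, rfl⟩ := r.mkQ_surjective m
    intro h
    rw [mkQ_apply, mapQ_apply, Submodule.Quotient.mk_eq_zero] at h
    rw [mkQ_apply, Submodule.Quotient.mk_eq_zero]
    exact h
  · intro m
    obtain ⟨c, rfl⟩ := q.mkQ_surjective m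
    exact ⟨p.mkQ c, rfl⟩
  · ext m
    obtain ⟨c, rfl⟩ := p.mkQ_surjective m
    rw [LinearMap.mem_ker, mkQ_apply, mapQ_apply, Submodule.Quotient.mk_eq_zero]
    constructor
    · rintro ⟨m', hm'⟩
      obtain ⟨b, rfl⟩ := r.mkQ_surjective m'
      rw [mkQ_apply, mapQ_apply, Submodule.Quotient.eq] at hm'
      have h3 : (b : H) - c ∈ A := hm'
      have h4 : (c : H) = b - (b - c) := by abel
      change (c : H) ∈ B
      rw [h4]
      exact B.sub_mem b.2 (hAB h3)
    · intro hc
      exact ⟨r.mkQ ⟨c, hc⟩, rfl⟩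

lemma ca_split {A B C : Submodule ℂ H} {n : ℕ} (hAB : A ≤ B) (hBC : B ≤ C) (h : CodimIn A C n) :
    ∃ j k, CodimIn A B j ∧ CodimIn B C k := by
  obtain ⟨ψ, χ, h1, h2, h3⟩ := cd_exact hAB hBC
  have := h.2.1
  exact ⟨_, _, ⟨hAB, Module.Finite.of_injective ψ h1, rfl⟩, hBC, Module.Finite.of_surjective χ h2, rfl⟩

lemma ca_add {A B C : Submodule ℂ H} {m n : ℕ} (hm : CodimIn A B m) (hn : CodimIn B C n) :
    CodimIn A C (m + n) := by
  obtain ⟨ψ, χ, h1, h2, h3⟩ := cd_exact hm.1 hn.1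
  have := hm.2.1
  have := hn.2.1
  have i1 : Module.Finite ℂ (LinearMap.ker χ) := by rw [← h3]; infer_instance
  have i2 : Module.Finite ℂ (↥C ⧸ A.comap C.subtype) := by
    have e := χ.quotKerEquivOfSurjective h2
    have := Module.Finite.equiv e.symm
    exact Module.Finite.of_submodule_quotient (LinearMap.ker χ)
  refine ⟨hm.1.trans hn.1, i2, ?_⟩
  have h4 := LinearMap.finrank_range_add_finrank_ker χ
  rw [← h3, LinearMap.finrank_range_of_inj h1, LinearMap.range_eq_top.2 h2, finrank_top, hm.2.2,
    hn.2.2] at h4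
  omega

lemma ca_unique {A B : Submodule ℂ H} {m n : ℕ} (hm : CodimIn A B m) (hn : CodimIn A B n) : m = n :=
  hm.2.2.symm.trans hn.2.2

lemma ca_cov {A B : Submodule ℂ H} (h : A ⋖ B) : CodimIn A B 1 := (codim_one_iff A B).2 h

lemma ca_inf {K K' Y : Submodule ℂ H} {n : ℕ} (h : CodimIn K Y n) (hK : K' ≤ Y) :
    ∃ k, CodimIn (K ⊓ K') K' k := by
  refine ⟨_, inf_le_right, ?_, rfl⟩
  have := h.2.1
  have h1 : (K ⊓ K').comap K'.subtype ≤ (K.comap Y.subtype).comap (inclusion hK) :=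
    fun x hx => hx.1
  apply Module.Finite.of_injective (((K ⊓ K').comap K'.subtype).mapQ (K.comap Y.subtype) (inclusion hK) h1)
  rw [← LinearMap.ker_eq_bot, LinearMap.ker_eq_bot']
  intro m
  obtain ⟨b, rfl⟩ := Submodule.mkQ_surjective _ m
  intro h
  rw [mkQ_apply, mapQ_apply, Submodule.Quotient.mk_eq_zero] at h
  rw [mkQ_apply, Submodule.Quotient.mk_eq_zero]
  exact ⟨h, b.2⟩

lemma ca_zero {A B : Submodule ℂ H} (h : CodimIn A B 0) : A = B := by
  apply le_antisymm h.1
  have := h.2.1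
  have h1 := Module.finrank_zero_iff.1 h.2.2
  rw [Submodule.Quotient.subsingleton_iff] at h1
  exact Submodule.comap_subtype_eq_top.1 h1

lemma ca_refl (A : Submodule ℂ H) : CodimIn A A 0 := by
  have h : A.comap A.subtype = ⊤ := by simp
  refine ⟨le_rfl, ?_, ?_⟩
  · rw [h]; infer_instance
  · rw [h]
    have : Subsingleton (↥A ⧸ (⊤ : Submodule ℂ A)) := by
      rw [Submodule.Quotient.subsingleton_iff]
    exact Module.finrank_zero_of_subsingleton

def ER (X Y : Submodule ℂ H) : Prop :=
  ∃ K : Submodule ℂ H, ∃ n : ℕ, IsClosed (K : Set H) ∧ CodimIn K X n ∧ CodimIn K Y n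

lemma ER.refl {X : Submodule ℂ H} (hX : IsClosed (X : Set H)) : ER X X :=
  ⟨X, 0, hX, ca_refl X, ca_refl X⟩

lemma ER.symm {X Y : Submodule ℂ H} (h : ER X Y) : ER Y X := by
  obtain ⟨K, n, h1, h2, h3⟩ := h
  exact ⟨K, n, h1, h3, h2⟩

lemma ER.trans {X Y Z : Submodule ℂ H} (h : ER X Y) (h' : ER Y Z) : ER X Z := by
  obtain ⟨K, n, h1, h2, h3⟩ := h
  obtain ⟨K', m, h1', h2', h3'⟩ := h'
  obtain ⟨k, hk⟩ := ca_inf h3 h2'.1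
  obtain ⟨j, hj⟩ := ca_inf h2' h3.1
  rw [inf_comm] at hj
  have e := ca_unique (ca_add hk h2') (ca_add hj h3)
  exact ⟨K ⊓ K', j + n, isClosed_inf h1 h1', ca_add hj h2, e ▸ ca_add hk h3'⟩

lemma ER.of_cov {W X Y : Submodule ℂ H} (hW : IsClosed (W : Set H)) (hX : W ⋖ X) (hY : W ⋖ Y) :
    ER X Y := ⟨W, 1, hW, ca_cov hX, ca_cov hY⟩

lemma ER.below {W W' X X' : Submodule ℂ H} (hW : IsClosed (W : Set H)) (hW' : IsClosed (W' : Set H))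
    (hX : W ⋖ X) (hX' : W' ⋖ X') (h : ER X X') : ER W W' := by
  obtain ⟨K, n, h1, h2, h3⟩ := h
  obtain ⟨j1, hj1⟩ := ca_inf (ca_cov hX) h2.1
  obtain ⟨j2, hj2⟩ := ca_inf (K' := W ⊓ K) (ca_cov hX') (inf_le_right.trans h3.1)
  have hK := ca_add hj2 hj1
  have hJX := ca_add hK h2
  have hJX' := ca_add hK h3
  obtain ⟨a, b, ha, hb⟩ := ca_split (B := W) (inf_le_right.trans inf_le_left) hX.le hJX
  obtain ⟨a', b', ha', hb'⟩ := ca_split (B := W') inf_le_left hX'.le hJX'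
  have e1 := ca_unique hJX (ca_add ha (ca_cov hX))
  have e2 := ca_unique hJX' (ca_add ha' (ca_cov hX'))
  have : a' = a := by omega
  exact ⟨_, a, isClosed_inf hW' (isClosed_inf hW h1), ha, this ▸ ha'⟩

lemma hyper_cov {W : Submodule ℂ H} {a : H} (ha : a ∈ W) (h0 : a ≠ 0) : W ⊓ (ℂ ∙ a)ᗮ ⋖ W := by
  have haa : inner ℂ a a ≠ (0 : ℂ) := by simpa using h0
  have hn : a ∉ W ⊓ (ℂ ∙ a)ᗮ := fun h => h0 (inner_self_eq_zero.1 (mem_perp_span.1 h.2))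
  have h1 : W = W ⊓ (ℂ ∙ a)ᗮ ⊔ ℂ ∙ a := by
    apply le_antisymm
    · intro v hv
      have : v = (v - (inner ℂ a v / inner ℂ a a) • a) + (inner ℂ a v / inner ℂ a a) • a := by simp
      rw [this]
      apply Submodule.add_mem_sup
      · refine ⟨W.sub_mem hv (W.smul_mem _ ha), ?_⟩
        change _ ∈ (ℂ ∙ a)ᗮ
        rw [mem_perp_span, inner_sub_right, inner_smul_right]
        field_simp; ring
      · exact Submodule.smul_mem _ _ (mem_span_singleton_self a)
    · exact sup_le inf_le_left (by simpa using ha)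
  have h2 := cov_sup hn
  rwa [← h1] at h2

lemma closed_perp (K : Submodule ℂ H) : IsClosed (Kᗮ : Set H) := K.isClosed_orthogonal

lemma exists_perp_in {K : Submodule ℂ H} (hK : K ∈ Ginf (H := H)) (N : Submodule ℂ H)
    [FiniteDimensional ℂ N] : ∃ y, y ≠ 0 ∧ y ∈ Kᗮ ∧ y ∈ Nᗮ := by
  by_contra hcon
  push Not at hcon
  apply hK.2.2
  let T : ↥Kᗮ →ₗ[ℂ] N := (N.orthogonalProjectionOnto : H →ₗ[ℂ] N).comp Kᗮ.subtype
  apply Module.Finite.of_injective T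
  rw [← LinearMap.ker_eq_bot, LinearMap.ker_eq_bot']
  intro m hm
  by_contra hm0
  refine hcon m (by simpa using hm0) m.2 ?_
  have : N.orthogonalProjectionOnto (m : H) = 0 := hm
  rwa [Submodule.orthogonalProjectionOnto_eq_zero_iff] at this

lemma mkOA {W X : Submodule ℂ H} {y : H} (hX : W ⋖ X) (hy : y ∈ Xᗮ) (h0 : y ≠ 0) :
    W ⋖ W ⊔ ℂ ∙ y ∧ X ⊓ (W ⊔ ℂ ∙ y) = W ∧ OA X (W ⊔ ℂ ∙ y) := by
  have hyX := not_mem_of_perp hy h0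
  have hyW : y ∉ W := fun h => hyX (hX.le h)
  have h1 := cov_sup hyW
  have hne : X ≠ W ⊔ ℂ ∙ y := by
    intro h; apply hyX; rw [h]; exact le_sup_right (a := W) (mem_span_singleton_self y)
  obtain ⟨h2, h3⟩ := cov_below hX h1 hne
  refine ⟨h1, h2, h3, ?_⟩
  rw [h2]
  rintro x ⟨hx, hxW⟩
  rw [← Submodule.inf_orthogonal]
  refine ⟨hxW, ?_⟩
  change x ∈ (ℂ ∙ y)ᗮ
  rw [mem_perp_span]
  exact inner_eq_zero_symm.1 (hy x hx)

def Stp (N : Submodule ℂ H) (A B : Submodule ℂ H) : Prop :=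
  A ∈ Ginf (H := H) ∧ B ∈ Ginf (H := H) ∧ A ≤ Nᗮ ∧ B ≤ Nᗮ ∧ OA A B

lemma adj_ginf {A B : Submodule ℂ H} (hA : A ∈ Ginf (H := H)) (hB : IsClosed (B : Set H))
    (h : AdjL A B) : A ⊓ B ∈ Ginf (H := H) ∧ B ∈ Ginf (H := H) ∧ A ⊔ B ∈ Ginf (H := H) := by
  have hW := isClosed_inf hA.1 hB
  have h1 := (ginf_cov hW h.1).2 hA
  exact ⟨h1, (ginf_cov hW h.2).1 h1, (ginf_cov hA.1 h.sup_left).1 hA⟩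

lemma chain_adj (N : Submodule ℂ H) [FiniteDimensional ℂ N] {A B : Submodule ℂ H}
    (hA : A ∈ Ginf (H := H)) (hB : B ∈ Ginf (H := H)) (hAN : A ≤ Nᗮ) (hBN : B ≤ Nᗮ)
    (h : AdjL A B) : Relation.ReflTransGen (Stp N) A B := by
  obtain ⟨hW, -, hV⟩ := adj_ginf hA hB.1 h
  obtain ⟨y, hy0, hy, hyN⟩ := exists_perp_in hV N
  obtain ⟨h1, h2, h3⟩ := mkOA h.1 (Submodule.orthogonal_le le_sup_left hy) hy0
  obtain ⟨-, h2', h3'⟩ := mkOA h.2 (Submodule.orthogonal_le le_sup_right hy) hy0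
  have hZ := (ginf_cov hW.1 h1).1 hW
  have hZN : A ⊓ B ⊔ ℂ ∙ y ≤ Nᗮ := sup_le (inf_le_left.trans hAN) (by simpa using hyN)
  exact (Relation.ReflTransGen.single ⟨hA, hZ, hAN, hZN, h3⟩).tail
    ⟨hZ, hB, hZN, hBN, OA.symm hB.1 hZ.1 h3'⟩

lemma chain_of_ER (N : Submodule ℂ H) [FiniteDimensional ℂ N] {W W' : Submodule ℂ H}
    (hW : W ∈ Ginf (H := H)) (hW' : W' ∈ Ginf (H := H)) (hN : W ≤ Nᗮ) (hN' : W' ≤ Nᗮ)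
    (h : ER W W') : Relation.ReflTransGen (Stp N) W W' := by
  obtain ⟨K, n, hK, h1, h2⟩ := h
  induction n generalizing W K with
  | zero => rw [← ca_zero h1, ← ca_zero h2]
  | succ n ih =>
    have hne : K ≠ W' := by
      rintro rfl
      have := ca_unique h2 (ca_refl K)
      omega
    obtain ⟨b, hb, hbK⟩ := SetLike.exists_of_lt (lt_of_le_of_ne h2.1 hne)
    have hKc := cov_sup hbK
    have red : ∀ X, b ∈ X → CodimIn K X (n + 1) → CodimIn (K ⊔ ℂ ∙ b) X n := by
      intro X hbX hX
      obtain ⟨j, k, hj, hk⟩ := ca_split (B := K ⊔ ℂ ∙ b) le_sup_left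
        (sup_le hX.1 (by simpa using hbX)) hX
      have e := ca_unique hX (ca_add (ca_cov hKc) hk)
      have : k = n := by omega
      exact this ▸ hk
    have hK2 := closed_of_cov hK hKc
    by_cases hbW : b ∈ W
    · exact ih hW hN _ hK2 (red W hbW h1) (red W' hb h2)
    · have hne1 : K ≠ W := by
        rintro rfl
        have := ca_unique h1 (ca_refl K)
        omega
      have := hop hK
      have h3 := Submodule.sup_orthogonal_inf_of_hasOrthogonalProjection h1.1
      have h4 : Kᗮ ⊓ W ≠ ⊥ := by
        intro hbot
        rw [hbot, sup_bot_eq] at h3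
        exact hne1 h3
      obtain ⟨a, ha, ha0⟩ := Submodule.exists_mem_ne_zero_of_ne_bot h4
      have hL := hyper_cov ha.2 ha0
      have hLc : IsClosed ((W ⊓ (ℂ ∙ a)ᗮ : Submodule ℂ H) : Set H) := isClosed_inf hW.1 (closed_perp _)
      have hKL : K ≤ W ⊓ (ℂ ∙ a)ᗮ := by
        refine le_inf h1.1 ?_
        intro k hk
        rw [mem_perp_span]
        exact inner_eq_zero_symm.1 (ha.1 k hk)
      obtain ⟨j, k, hj, hk⟩ := ca_split hKL inf_le_left h1
      have e := ca_unique h1 (ca_add hj (ca_cov hL))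
      have hjn : j = n := by omega
      subst hjn
      have hbL : b ∉ W ⊓ (ℂ ∙ a)ᗮ := fun h => hbW h.1
      have hW1 := cov_sup hbL
      have hbW1 : b ∈ W ⊓ (ℂ ∙ a)ᗮ ⊔ ℂ ∙ b := le_sup_right (a := W ⊓ (ℂ ∙ a)ᗮ) (mem_span_singleton_self b)
      have hneW : W ≠ W ⊓ (ℂ ∙ a)ᗮ ⊔ ℂ ∙ b := by
        intro h; apply hbW; rw [h]; exact hbW1
      have hadj := (cov_below hL hW1 hneW).2
      have hW1g := (adj_ginf hW (closed_of_cov hLc hW1) hadj).2.1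
      have hW1N : W ⊓ (ℂ ∙ a)ᗮ ⊔ ℂ ∙ b ≤ Nᗮ :=
        sup_le (inf_le_left.trans hN) (by simpa using hN' hb)
      exact (chain_adj N hW hW1g hN hW1N hadj).trans
        (ih hW1g hW1N _ hK2 (red _ hbW1 (ca_add hj (ca_cov hW1))) (red W' hb h2))

lemma ER_of_chain {N W W' : Submodule ℂ H} (hW : IsClosed (W : Set H))
    (h : Relation.ReflTransGen (Stp N) W W') : ER W W' := by
  induction h with
  | refl => exact ER.refl hW
  | tail _ h ih =>
    exact ih.trans (ER.of_cov (isClosed_inf h.1.1 h.2.1.1) h.2.2.2.2.1.1 h.2.2.2.2.1.2)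

lemma mem_line {X : Submodule ℂ H} {y v : H} (hy : y ∈ Xᗮ) (hv : v ∈ X ⊔ ℂ ∙ y) (hvX : v ∈ Xᗮ) :
    ∃ t : ℂ, v = t • y := by
  obtain ⟨x, hx, z, hz, rfl⟩ := Submodule.mem_sup.1 hv
  obtain ⟨t, rfl⟩ := Submodule.mem_span_singleton.1 hz
  refine ⟨t, ?_⟩
  have h1 : x ∈ Xᗮ := by
    have := Submodule.sub_mem _ hvX (Submodule.smul_mem _ t hy)
    simpa using this
  have : x = 0 := inner_self_eq_zero.1 (h1 x hx)
  simp [this]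

lemma ginf_perp {X : Submodule ℂ H} (hX : X ∈ Ginf (H := H)) : Xᗮ ∈ Ginf (H := H) := by
  refine ⟨closed_perp X, hX.2.2, ?_⟩
  rw [perp_perp hX.1]; exact hX.2.1

lemma oa_perp {X Y : Submodule ℂ H} (hX : IsClosed (X : Set H)) (hY : IsClosed (Y : Set H))
    (h : OA X Y) : OA Xᗮ Yᗮ := by
  have h1 : Xᗮ ⊓ Yᗮ = (X ⊔ Y)ᗮ := Submodule.inf_orthogonal X Y
  have hV : IsClosed ((X ⊔ Y : Submodule ℂ H) : Set H) := closed_of_cov hX h.1.sup_left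
  refine ⟨⟨?_, ?_⟩, ?_⟩
  · rw [h1]; exact perp_cov hX h.1.sup_left
  · rw [h1]; exact perp_cov hY h.1.sup_right
  · rw [h1, perp_perp hV, perp_perp hY]
    rintro v ⟨hvX, hv⟩
    obtain ⟨y, hyY, hyW, hy0, hY'⟩ := cov_form (isClosed_inf hX hY) h.1.2
    have hyX : y ∈ Xᗮ := (h.symm hX hY).2 ⟨hyY, by rw [inf_comm]; exact hyW⟩
    have h2 : X ⊔ Y = X ⊔ ℂ ∙ y :=
      eq_sup_of_cov h.1.sup_left (le_sup_right (a := X) hyY) (not_mem_of_perp hyX hy0)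
    rw [h2] at hv
    obtain ⟨t, rfl⟩ := mem_line hyX hv hvX
    exact Y.smul_mem t hyY

lemma oa3_false {A B C : Submodule ℂ H} (hA : IsClosed (A : Set H)) (hB : IsClosed (B : Set H))
    (hC : IsClosed (C : Set H)) (hAB : OA A B) (hAC : OA A C) (hBC : OA B C)
    (h1 : A ⊓ B ≤ C) (h2 : C ≤ A ⊔ B) : False := by
  have e1 := hAC.1.inf_eq hAB.1.1 h1
  have e2 := hBC.1.inf_eq hAB.1.2 h1
  obtain ⟨y, hyC, hyW, hy0, -⟩ := cov_form (isClosed_inf hA hB) e1.2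
  have a1 : y ∈ Aᗮ := (hAC.symm hA hC).2 ⟨hyC, by rw [inf_comm, e1.1]; exact hyW⟩
  have a2 : y ∈ Bᗮ := (hBC.symm hB hC).2 ⟨hyC, by rw [inf_comm, e2.1]; exact hyW⟩
  have a3 : y ∈ (A ⊔ B)ᗮ := by rw [← Submodule.inf_orthogonal]; exact ⟨a1, a2⟩
  exact hy0 (inner_self_eq_zero.1 (a3 y (h2 hyC)))

lemma adj_char {X Z : Submodule ℂ H} (hX : X ∈ Ginf (H := H)) (hZ : Z ∈ Ginf (H := H)) :
    AdjL X Z ↔ X ≠ Z ∧ ∃ A ∈ Ginf (H := H), ∃ B ∈ Ginf (H := H), ∃ C ∈ Ginf (H := H),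
      OA A B ∧ OA A C ∧ OA B C ∧ OA X A ∧ OA X B ∧ OA X C ∧ OA Z A ∧ OA Z B ∧ OA Z C := by
  constructor
  · intro h
    refine ⟨h.ne, ?_⟩
    obtain ⟨hW, -, hV⟩ := adj_ginf hX hZ.1 h
    obtain ⟨a, a0, ha, -⟩ := exists_perp_in hV (⊥ : Submodule ℂ H)
    obtain ⟨b, b0, hb, hba⟩ := exists_perp_in hV (ℂ ∙ a)
    obtain ⟨c, c0, hc, hcab⟩ := exists_perp_in hV ((ℂ ∙ a) ⊔ ℂ ∙ b)
    have hX' : (X ⊔ Z)ᗮ ≤ Xᗮ := Submodule.orthogonal_le le_sup_left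
    have hZ' : (X ⊔ Z)ᗮ ≤ Zᗮ := Submodule.orthogonal_le le_sup_right
    have hW' : (X ⊔ Z)ᗮ ≤ (X ⊓ Z)ᗮ := Submodule.orthogonal_le (inf_le_left.trans le_sup_left)
    rw [← Submodule.inf_orthogonal] at hcab
    obtain ⟨hca, hcb⟩ := hcab
    have key : ∀ x y : H, x ∈ (X ⊓ Z)ᗮ → y ∈ (X ⊓ Z)ᗮ → y ∈ (ℂ ∙ x)ᗮ → y ∈ (X ⊓ Z ⊔ ℂ ∙ x)ᗮ := by
      intro x y hx hy hxy
      rw [← Submodule.inf_orthogonal]; exact ⟨hy, hxy⟩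
    have A1 := mkOA h.1 (hX' ha) a0
    have B1 := mkOA h.1 (hX' hb) b0
    have C1 := mkOA h.1 (hX' hc) c0
    have A2 := mkOA h.2 (hZ' ha) a0
    have B2 := mkOA h.2 (hZ' hb) b0
    have C2 := mkOA h.2 (hZ' hc) c0
    have AB := mkOA A1.1 (key a b (hW' ha) (hW' hb) hba) b0
    have AC := mkOA A1.1 (key a c (hW' ha) (hW' hc) hca) c0
    have BC := mkOA B1.1 (key b c (hW' hb) (hW' hc) hcb) c0
    exact ⟨_, (ginf_cov hW.1 A1.1).1 hW, _, (ginf_cov hW.1 B1.1).1 hW, _,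
      (ginf_cov hW.1 C1.1).1 hW, AB.2.2, AC.2.2, BC.2.2, A1.2.2, B1.2.2, C1.2.2, A2.2.2, B2.2.2, C2.2.2⟩
  · rintro ⟨hne, A, hA, B, hB, C, hC, AB, AC, BC, XA, XB, XC, ZA, ZB, ZC⟩
    by_cases hs : A ⊓ B ≤ C
    · have hn : ¬ C ≤ A ⊔ B := fun h => oa3_false hA.1 hB.1 hC.1 AB AC BC hs h
      have e1 := AC.1.inf_eq AB.1.1 hs
      have x1 := star3 AB.1.1 AB.1.2 e1.2 AB.1.ne hn (Or.inr XA.1) (Or.inr XB.1) (Or.inr XC.1)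
      have z1 := star3 AB.1.1 AB.1.2 e1.2 AB.1.ne hn (Or.inr ZA.1) (Or.inr ZB.1) (Or.inr ZC.1)
      exact (cov_below (XA.1.symm.inf_eq AB.1.1 x1).2 (ZA.1.symm.inf_eq AB.1.1 z1).2 hne).2
    · have ht := (adj_or AB.1 AC.1 BC.1).resolve_left hs
      have e1 := AC.1.sup_eq AB.1.sup_left ht
      have x1 := top3 AB.1.sup_left AB.1.sup_right e1.2 AB.1.ne hs (Or.inr XA.1) (Or.inr XB.1) (Or.inr XC.1)
      have z1 := top3 AB.1.sup_left AB.1.sup_right e1.2 AB.1.ne hs (Or.inr ZA.1) (Or.inr ZB.1) (Or.inr ZC.1)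
      exact (cov_above (XA.1.symm.sup_eq AB.1.sup_left x1).2 (ZA.1.symm.sup_eq AB.1.sup_left z1).2 hne).2

structure OAut (f g : Submodule ℂ H → Submodule ℂ H) : Prop where
  fm : ∀ X ∈ Ginf (H := H), f X ∈ Ginf (H := H)
  gm : ∀ X ∈ Ginf (H := H), g X ∈ Ginf (H := H)
  fg : ∀ X ∈ Ginf (H := H), f (g X) = X
  gf : ∀ X ∈ Ginf (H := H), g (f X) = X
  oa : ∀ X ∈ Ginf (H := H), ∀ Y ∈ Ginf (H := H), OA X Y → OA (f X) (f Y)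
  oa' : ∀ X ∈ Ginf (H := H), ∀ Y ∈ Ginf (H := H), OA X Y → OA (g X) (g Y)

namespace OAut
variable {f g : Submodule ℂ H → Submodule ℂ H}

lemma symm (h : OAut f g) : OAut g f := ⟨h.gm, h.fm, h.gf, h.fg, h.oa', h.oa⟩

lemma perp (h : OAut f g) : OAut (fun X => (f X)ᗮ) (fun X => g Xᗮ) where
  fm X hX := ginf_perp (h.fm X hX)
  gm X hX := h.gm _ (ginf_perp hX)
  fg X hX := by
    change (f (g Xᗮ))ᗮ = X
    rw [h.fg _ (ginf_perp hX), perp_perp hX.1]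
  gf X hX := by
    change g (f X)ᗮᗮ = X
    rw [perp_perp (h.fm X hX).1, h.gf X hX]
  oa X hX Y hY hXY := oa_perp (h.fm X hX).1 (h.fm Y hY).1 (h.oa X hX Y hY hXY)
  oa' X hX Y hY hXY := h.oa' _ (ginf_perp hX) _ (ginf_perp hY) (oa_perp hX.1 hY.1 hXY)

lemma inj (h : OAut f g) {X Y : Submodule ℂ H} (hX : X ∈ Ginf (H := H)) (hY : Y ∈ Ginf (H := H))
    (e : f X = f Y) : X = Y := by
  rw [← h.gf X hX, e, h.gf Y hY]

lemma adj (h : OAut f g) {X Y : Submodule ℂ H} (hX : X ∈ Ginf (H := H)) (hY : Y ∈ Ginf (H := H))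
    (hXY : AdjL X Y) : AdjL (f X) (f Y) := by
  rw [adj_char hX hY] at hXY
  rw [adj_char (h.fm X hX) (h.fm Y hY)]
  obtain ⟨hne, A, hA, B, hB, C, hC, AB, AC, BC, XA, XB, XC, ZA, ZB, ZC⟩ := hXY
  exact ⟨fun e => hne (h.inj hX hY e), _, h.fm A hA, _, h.fm B hB, _, h.fm C hC,
    h.oa _ hA _ hB AB, h.oa _ hA _ hC AC, h.oa _ hB _ hC BC, h.oa _ hX _ hA XA, h.oa _ hX _ hB XB,
    h.oa _ hX _ hC XC, h.oa _ hY _ hA ZA, h.oa _ hY _ hB ZB, h.oa _ hY _ hC ZC⟩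

lemma adj' (h : OAut f g) {X Y : Submodule ℂ H} (hX : X ∈ Ginf (H := H)) (hY : Y ∈ Ginf (H := H))
    (hXY : AdjL (f X) (f Y)) : AdjL X Y := by
  have := h.symm.adj (h.fm X hX) (h.fm Y hY) hXY
  rwa [h.gf X hX, h.gf Y hY] at this

end OAut

lemma three_star {W : Submodule ℂ H} (hW : W ∈ Ginf (H := H)) :
    ∃ A B C : Submodule ℂ H, W ⋖ A ∧ W ⋖ B ∧ W ⋖ C ∧ A ≠ B ∧ ¬ C ≤ A ⊔ B := by
  obtain ⟨a, a0, ha, -⟩ := exists_perp_in hW (⊥ : Submodule ℂ H)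
  obtain ⟨b, b0, hb, hba⟩ := exists_perp_in hW (ℂ ∙ a)
  obtain ⟨c, c0, hc, hcab⟩ := exists_perp_in hW ((ℂ ∙ a) ⊔ ℂ ∙ b)
  refine ⟨_, _, _, cov_sup (not_mem_of_perp ha a0), cov_sup (not_mem_of_perp hb b0),
    cov_sup (not_mem_of_perp hc c0), ?_, ?_⟩
  · intro e
    have h1 : b ∈ W ⊔ ℂ ∙ a := by
      rw [e]; exact le_sup_right (a := W) (mem_span_singleton_self b)
    have h2 : b ∈ (W ⊔ ℂ ∙ a)ᗮ := by
      rw [← Submodule.inf_orthogonal]; exact ⟨hb, hba⟩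
    exact not_mem_of_perp h2 b0 h1
  · intro e
    have h1 := e (le_sup_right (a := W) (mem_span_singleton_self c))
    rw [← Submodule.inf_orthogonal] at hcab
    have h2 : c ∈ (W ⊔ ℂ ∙ a ⊔ (W ⊔ ℂ ∙ b))ᗮ := by
      simp only [← Submodule.inf_orthogonal]
      exact ⟨⟨hc, hcab.1⟩, ⟨hc, hcab.2⟩⟩
    exact not_mem_of_perp h2 c0 h1

def SP (f : Submodule ℂ H → Submodule ℂ H) (W A : Submodule ℂ H) : Prop :=
  IsClosed (A : Set H) ∧ ∀ X, W ⋖ X → A ⋖ f X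

def SQ (f : Submodule ℂ H → Submodule ℂ H) (W V : Submodule ℂ H) : Prop :=
  IsClosed (V : Set H) ∧ ∀ X, W ⋖ X → f X ⋖ V

section
variable {f g : Submodule ℂ H → Submodule ℂ H} {W W' A A' V X X0 Y : Submodule ℂ H}

lemma S1 (h : OAut f g) (hW : W ∈ Ginf (H := H)) (hY : Y ∈ Ginf (H := H))
    (hh : ∀ X, W ⋖ X → f Y = f X ∨ AdjL (f Y) (f X)) : W ⋖ Y := by
  have key : ∀ X, W ⋖ X → Y = X ∨ AdjL Y X := by
    intro X hX
    have hXG := (ginf_cov hW.1 hX).1 hW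
    rcases hh X hX with e | e
    · exact Or.inl (h.inj hY hXG e)
    · exact Or.inr (h.adj' hY hXG e)
  obtain ⟨A, B, C, hA, hB, hC, hAB, hn⟩ := three_star hW
  have hle := star3 hA hB hC hAB hn (key A hA) (key B hB) (key C hC)
  rcases key A hA with e | e
  · rw [e]; exact hA
  · exact (e.symm.inf_eq hA hle).2

lemma SP.back (h : OAut f g) (hW : W ∈ Ginf (H := H)) (hA : SP f W A) (hY : Y ∈ Ginf (H := H))
    (hAY : A ⋖ f Y) : W ⋖ Y := by
  apply S1 h hW hY
  intro X hX
  by_cases e : f Y = f X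
  · exact Or.inl e
  · exact Or.inr (cov_below hAY (hA.2 X hX) e).2

lemma SQ.back (h : OAut f g) (hW : W ∈ Ginf (H := H)) (hA : SQ f W V) (hY : Y ∈ Ginf (H := H))
    (hAY : f Y ⋖ V) : W ⋖ Y := by
  apply S1 h hW hY
  intro X hX
  by_cases e : f Y = f X
  · exact Or.inl e
  · exact Or.inr (cov_above hAY (hA.2 X hX) e).2

lemma PQ (h : OAut f g) (hW : W ∈ Ginf (H := H)) : (∃ A, SP f W A) ∨ ∃ V, SQ f W V := by
  obtain ⟨A, B, C, hA, hB, hC, hAB, hn⟩ := three_star hW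
  have hG : ∀ X, W ⋖ X → X ∈ Ginf (H := H) := fun X hX => (ginf_cov hW.1 hX).1 hW
  have hF : ∀ X ∈ f '' {X | W ⋖ X}, ∀ Y ∈ f '' {X | W ⋖ X}, X ≠ Y → AdjL X Y := by
    rintro _ ⟨X, hX, rfl⟩ _ ⟨Y, hY, rfl⟩ hne
    refine h.adj (hG X hX) (hG Y hY) (cov_below hX hY ?_).2
    rintro rfl; exact hne rfl
  have hne : f A ≠ f B := fun e => hAB (h.inj (hG A hA) (hG B hB) e)
  have hcA := (h.fm A (hG A hA)).1
  have hcB := (h.fm B (hG B hB)).1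
  rcases clique_or _ hF ⟨A, hA, rfl⟩ ⟨B, hB, rfl⟩ hne with h1 | h1
  · exact Or.inl ⟨f A ⊓ f B, isClosed_inf hcA hcB, fun X hX => h1 _ ⟨X, hX, rfl⟩⟩
  · exact Or.inr ⟨f A ⊔ f B, closed_of_cov hcA (h1 _ ⟨A, hA, rfl⟩), fun X hX => h1 _ ⟨X, hX, rfl⟩⟩

lemma notPQ (h : OAut f g) (hX : X ∈ Ginf (H := H)) (hW : IsClosed (W : Set H))
    (hW' : IsClosed (W' : Set H)) (h1 : W ⋖ X) (h2 : W' ⋖ X) (hne : W ≠ W')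
    (hA : SP f W A) (hV : SQ f W' V) : False := by
  have hfX := h.fm X hX
  have c1 := hA.2 X h1
  have c2 := hV.2 X h2
  obtain ⟨v, hvV, hv, v0, -⟩ := cov_form hfX.1 c2
  have hvX := not_mem_of_perp hv v0
  have c3 := cov_sup (fun hm => hvX (c1.le hm))
  have hne' : f X ≠ A ⊔ ℂ ∙ v := by
    intro e; apply hvX; rw [e]; exact le_sup_right (a := A) (mem_span_singleton_self v)
  have hZ : A ⊔ ℂ ∙ v ∈ Ginf (H := H) := (ginf_cov hA.1 c3).1 ((ginf_cov hA.1 c1).2 hfX)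
  have hle : A ⊔ ℂ ∙ v ≤ V := sup_le (c1.le.trans c2.le) (by simpa using hvV)
  have c4 := ((cov_below c1 c3 hne').2.sup_eq c2 hle).2
  have hY := h.gm _ hZ
  have e := h.fg _ hZ
  have b1 := hA.back h ((ginf_cov hW h1).2 hX) hY (by rw [e]; exact c3)
  have b2 := hV.back h ((ginf_cov hW' h2).2 hX) hY (by rw [e]; exact c4)
  have b3 : X ≤ g (A ⊔ ℂ ∙ v) := by
    rw [← (cov_above h1 h2 hne).1]; exact sup_le b1.le b2.le
  have b4 : X = g (A ⊔ ℂ ∙ v) := (b1.eq_or_eq h1.le b3).resolve_left h1.ne'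
  apply hne'
  rw [← e, ← b4]

def Hall (f : Submodule ℂ H → Submodule ℂ H) (X0 : Submodule ℂ H) : Prop :=
  ∀ X ∈ Ginf (H := H), ER X0 X → ∀ W : Submodule ℂ H, IsClosed (W : Set H) → W ⋖ X → ∃ A, SP f W A

lemma hyper_all (h : OAut f g) (hX : X ∈ Ginf (H := H)) (hW : IsClosed (W : Set H)) (hWX : W ⋖ X)
    (hA : ∃ A, SP f W A) (W' : Submodule ℂ H) (hW' : IsClosed (W' : Set H)) (hWX' : W' ⋖ X) :
    ∃ A, SP f W' A := by
  by_cases e : W = W'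
  · exact e ▸ hA
  · rcases PQ h ((ginf_cov hW' hWX').2 hX) with h1 | ⟨V, hV⟩
    · exact h1
    · obtain ⟨A, hA⟩ := hA
      exact (notPQ h hX hW hW' hWX hWX' e hA hV).elim

lemma hall_of (h : OAut f g) (hX0 : X0 ∈ Ginf (H := H)) (hW : IsClosed (W : Set H)) (hWX : W ⋖ X0)
    (hA : ∃ A, SP f W A) : Hall f X0 := by
  intro X hX hER
  have hch := chain_of_ER ⊥ hX0 hX (by simp) (by simp) hER
  clear hER
  induction hch with
  | refl => exact fun W' => hyper_all h hX0 hW hWX hA W'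
  | @tail Y Z _ hst ih =>
    intro W' hW' hWZ
    have hcl := isClosed_inf hst.1.1 hst.2.1.1
    exact hyper_all h hst.2.1 hcl hst.2.2.2.2.1.2 (ih hst.1 _ hcl hst.2.2.2.2.1.1) W' hW' hWZ

lemma exists_hyper (hX0 : X0 ∈ Ginf (H := H)) : ∃ W : Submodule ℂ H, IsClosed (W : Set H) ∧ W ⋖ X0 := by
  have : X0 ≠ ⊥ := by
    rintro rfl; exact hX0.2.1 inferInstance
  obtain ⟨x, hx, x0⟩ := Submodule.exists_mem_ne_zero_of_ne_bot this
  exact ⟨_, isClosed_inf hX0.1 (closed_perp _), hyper_cov hx x0⟩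

lemma dichot (h : OAut f g) (hX0 : X0 ∈ Ginf (H := H)) : Hall f X0 ∨ Hall (fun X => (f X)ᗮ) X0 := by
  obtain ⟨W, hW, hWX⟩ := exists_hyper hX0
  rcases PQ h ((ginf_cov hW hWX).2 hX0) with h1 | ⟨V, hV⟩
  · exact Or.inl (hall_of h hX0 hW hWX h1)
  · refine Or.inr (hall_of h.perp hX0 hW hWX ⟨Vᗮ, closed_perp _, fun X hX => ?_⟩)
    exact perp_cov (h.fm X ((ginf_cov hW hX).1 ((ginf_cov hW hWX).2 hX0))).1 (hV.2 X hX)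

lemma er_map (h : OAut f g) (hX : X ∈ Ginf (H := H)) (hY : Y ∈ Ginf (H := H)) (hER : ER X Y) :
    ER (f X) (f Y) := by
  have hch := chain_of_ER ⊥ hX hY (by simp) (by simp) hER
  clear hER
  induction hch with
  | refl => exact ER.refl (h.fm X hX).1
  | @tail Y Z _ hst ih =>
    refine (ih hst.1).trans ?_
    have ha := h.adj hst.1 hst.2.1 hst.2.2.2.2.1
    exact ER.of_cov (isClosed_inf (h.fm _ hst.1).1 (h.fm _ hst.2.1).1) ha.1 ha.2

def DD (X0 W : Submodule ℂ H) : Prop := IsClosed (W : Set H) ∧ ∃ X, W ⋖ X ∧ X ∈ Ginf (H := H) ∧ ER X0 X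

lemma DD.ginf (h : DD X0 W) : W ∈ Ginf (H := H) := by
  obtain ⟨h1, X, h2, h3, -⟩ := h
  exact (ginf_cov h1 h2).2 h3

lemma DD.up (h : DD X0 W) (hY : W ⋖ Y) : Y ∈ Ginf (H := H) ∧ ER X0 Y := by
  refine ⟨(ginf_cov h.1 hY).1 h.ginf, ?_⟩
  obtain ⟨h1, X, h2, h3, h4⟩ := h
  exact h4.trans (ER.of_cov h1 h2 hY)

lemma DD.er (h : DD X0 W) (h' : DD X0 W') : ER W W' := by
  obtain ⟨h1, X, h2, h3, h4⟩ := h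
  obtain ⟨h1', X', h2', h3', h4'⟩ := h'
  exact ER.below h1 h1' h2 h2' (h4.symm.trans h4')

lemma DD.sp (h : DD X0 W) (ha : Hall f X0) : ∃ A, SP f W A := by
  obtain ⟨h1, X, h2, h3, h4⟩ := h
  exact ha X h3 h4 W h1 h2

lemma SP.ginf (hW : DD X0 W) (h : OAut f g) (hA : SP f W A) : A ∈ Ginf (H := H) := by
  obtain ⟨h1, X, h2, h3, h4⟩ := hW
  exact (ginf_cov hA.1 (hA.2 X h2)).2 (h.fm X h3)

end

lemma ca_perp (X N : Submodule ℂ H) [FiniteDimensional ℂ N] : ∃ k, CodimIn (X ⊓ Nᗮ) X k := by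
  have h : CodimIn Nᗮ ⊤ (finrank ℂ (↥(⊤ : Submodule ℂ H) ⧸ Nᗮ.comap (⊤ : Submodule ℂ H).subtype)) := by
    refine ⟨le_top, ?_, rfl⟩
    have e : FiniteDimensional ℂ (H ⧸ Nᗮ) :=
      Module.Finite.equiv (Submodule.quotientEquivOfIsCompl Nᗮ N
        (Submodule.isCompl_orthogonal (K := N)).symm).symm
    refine Module.Finite.of_injective
      (Submodule.mapQ (Nᗮ.comap (⊤ : Submodule ℂ H).subtype) Nᗮ (⊤ : Submodule ℂ H).subtype le_rfl) ?_
    rw [← LinearMap.ker_eq_bot, Submodule.ker_mapQ]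
    simp
  obtain ⟨k, hk⟩ := ca_inf h (le_top : X ≤ ⊤)
  exact ⟨k, by rw [inf_comm]; exact hk⟩

lemma ca_ginf {K X : Submodule ℂ H} {n : ℕ} (hK : IsClosed (K : Set H)) (h : CodimIn K X n)
    (hX : X ∈ Ginf (H := H)) : K ∈ Ginf (H := H) := by
  refine ⟨hK, ?_, ?_⟩
  · intro hf
    apply hX.2.1
    have := h.2.1
    have : FiniteDimensional ℂ (K.comap X.subtype) :=
      Module.Finite.equiv (Submodule.comapSubtypeEquivOfLe h.1).symm
    exact Module.Finite.of_submodule_quotient (K.comap X.subtype)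
  · intro hf
    exact hX.2.2 (Submodule.finiteDimensional_of_le (Submodule.orthogonal_le h.1))

lemma perp_swap {W N : Submodule ℂ H} (h : W ≤ Nᗮ) : N ≤ Wᗮ :=
  fun x hx w hw => inner_eq_zero_symm.1 (h hw x hx)

lemma mem_perp_of {W : Submodule ℂ H} {c : H} (h : W ≤ (ℂ ∙ c)ᗮ) : c ∈ Wᗮ :=
  perp_swap h (mem_span_singleton_self c)

lemma le_perp_of {W : Submodule ℂ H} {c : H} (h : c ∈ Wᗮ) : W ≤ (ℂ ∙ c)ᗮ :=
  perp_swap (by simpa using h)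

lemma extend_in (N : Submodule ℂ H) [FiniteDimensional ℂ N] {Z : Submodule ℂ H}
    (hZ : Z ∈ Ginf (H := H)) (hN : Z ≤ Nᗮ) (j : ℕ) :
    ∃ Z' : Submodule ℂ H, Z' ∈ Ginf (H := H) ∧ Z' ≤ Nᗮ ∧ CodimIn Z Z' j := by
  induction j with
  | zero => exact ⟨Z, hZ, hN, ca_refl Z⟩
  | succ j ih =>
    obtain ⟨Y, hY, hYN, hc⟩ := ih
    obtain ⟨y, y0, hy, hyN⟩ := exists_perp_in hY N
    have hcov := cov_sup (not_mem_of_perp hy y0)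
    exact ⟨_, (ginf_cov hY.1 hcov).1 hY, sup_le hYN (by simpa using hyN), ca_add hc (ca_cov hcov)⟩

lemma exists_DD {X0 : Submodule ℂ H} (hX0 : X0 ∈ Ginf (H := H)) (N : Submodule ℂ H)
    [FiniteDimensional ℂ N] : ∃ W, DD X0 W ∧ W ≤ Nᗮ := by
  have : X0 ≠ ⊥ := by
    rintro rfl; exact hX0.2.1 inferInstance
  obtain ⟨x, hx, x0⟩ := Submodule.exists_mem_ne_zero_of_ne_bot this
  obtain ⟨k, hk⟩ := ca_perp X0 (N ⊔ ℂ ∙ x)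
  have hcl : IsClosed ((X0 ⊓ (N ⊔ ℂ ∙ x)ᗮ : Submodule ℂ H) : Set H) := isClosed_inf hX0.1 (closed_perp _)
  rcases k with _ | k
  · exfalso
    have h1 := ca_zero hk
    have h2 : x ∈ X0 ⊓ (N ⊔ ℂ ∙ x)ᗮ := by rw [h1]; exact hx
    exact x0 (inner_self_eq_zero.1 (h2.2 x (le_sup_right (a := N) (mem_span_singleton_self x))))
  · have hle : X0 ⊓ (N ⊔ ℂ ∙ x)ᗮ ≤ Nᗮ := inf_le_right.trans (Submodule.orthogonal_le le_sup_left)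
    obtain ⟨W, hW, hWN, hc⟩ := extend_in N (ca_ginf hcl hk hX0) hle k
    obtain ⟨y, y0, hy, -⟩ := exists_perp_in hW (⊥ : Submodule ℂ H)
    have hcov := cov_sup (not_mem_of_perp hy y0)
    exact ⟨W, ⟨hW.1, _, hcov, (ginf_cov hW.1 hcov).1 hW, _, _, hcl, hk, ca_add hc (ca_cov hcov)⟩, hWN⟩

section
variable {f g : Submodule ℂ H → Submodule ℂ H} {W W' A A' V X X0 Y : Submodule ℂ H}

lemma line_step (h : OAut f g) (hW : DD X0 W) (hW' : DD X0 W') (hoa : OA W W') {c : H} (c0 : c ≠ 0)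
    (hc : W ≤ (ℂ ∙ c)ᗮ) (hc' : W' ≤ (ℂ ∙ c)ᗮ) (hA : SP f W A) (hA' : SP f W' A') :
    f (W ⊔ ℂ ∙ c) ⊓ Aᗮ ≤ f (W' ⊔ ℂ ∙ c) ⊓ A'ᗮ := by
  have ad := hoa.1
  have hcX3 : c ∈ (W ⊔ W')ᗮ := mem_perp_of (sup_le hc hc')
  have m1 := mkOA ad.sup_left hcX3 c0
  have m2 := mkOA ad.sup_right hcX3 c0
  have g1 := (hW.up m1.1).1
  have g2 := (hW'.up m2.1).1
  have g3 := (hW.up ad.sup_left).1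
  have y1 := h.fm _ g1
  have y2 := h.fm _ g2
  have y3 := h.fm _ g3
  have o1 := h.oa _ g3 _ g1 m1.2.2
  have o2 := h.oa _ g3 _ g2 m2.2.2
  have hne12 : W ⊔ ℂ ∙ c ≠ W' ⊔ ℂ ∙ c := by
    intro e
    have := m1.2.1
    rw [e, m2.2.1] at this
    exact ad.ne this.symm
  have a12 : AdjL (W ⊔ ℂ ∙ c) (W' ⊔ ℂ ∙ c) := by
    have s1 := m1.2.2.1.sup_right
    have s2 := m2.2.2.1.sup_right
    have e1 : W ⊔ W' ⊔ (W ⊔ ℂ ∙ c) = W ⊔ W' ⊔ ℂ ∙ c := by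
      rw [← sup_assoc]; congr 1; rw [sup_right_comm, sup_idem]
    have e2 : W ⊔ W' ⊔ (W' ⊔ ℂ ∙ c) = W ⊔ W' ⊔ ℂ ∙ c := by
      rw [← sup_assoc]; congr 1; rw [sup_assoc, sup_idem]
    rw [e1] at s1
    rw [e2] at s2
    exact (cov_above s1 s2 hne12).2
  have b12 := h.adj g1 g2 a12
  have A1 := hA.2 _ m1.1
  have A3 := hA.2 _ ad.sup_left
  have A2' := hA'.2 _ m2.1
  have A3' := hA'.2 _ ad.sup_right
  have i1 := (o1.1.inf_eq A3 A1.le).1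
  have i2 := (o2.1.inf_eq A3' A2'.le).1
  have hneA : A ≠ A' := by
    rintro rfl
    have hb := hA.back h hW.ginf g2 A2'
    have : W ≤ W' := by rw [← m2.2.1]; exact le_inf le_sup_left hb.le
    exact ad.not_le this
  have hle : f (W' ⊔ ℂ ∙ c) ≤ f (W ⊔ W') ⊔ f (W ⊔ ℂ ∙ c) := by
    rcases adj_or o1.1 o2.1 b12 with e | e
    · exfalso
      rw [i1] at e
      have : A ≤ A' := by rw [← i2]; exact le_inf A3.le e
      rcases A3.eq_or_eq this A3'.le with e | e
      · exact hneA e.symm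
      · exact A3'.ne e
    · exact e
  have hsup : f (W ⊔ W') ⊔ f (W' ⊔ ℂ ∙ c) = f (W ⊔ W') ⊔ f (W ⊔ ℂ ∙ c) :=
    (o1.1.sup_left.eq_or_eq le_sup_left (sup_le le_sup_left hle)).resolve_left o2.1.sup_left.ne'
  rintro v ⟨hv, hvA⟩
  have hv3 : v ∈ (f (W ⊔ W'))ᗮ :=
    (o1.symm y3.1 y1.1).2 ⟨hv, by rw [inf_comm, i1]; exact hvA⟩
  obtain ⟨z, hz, hzA, z0, -⟩ := cov_form hA'.1 A2'
  have hz3 : z ∈ (f (W ⊔ W'))ᗮ :=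
    (o2.symm y3.1 y2.1).2 ⟨hz, by rw [inf_comm, i2]; exact hzA⟩
  have hv' : v ∈ f (W ⊔ W') ⊔ ℂ ∙ z := by
    rw [← eq_sup_of_cov o2.1.sup_left (le_sup_right (a := f (W ⊔ W')) hz) (not_mem_of_perp hz3 z0), hsup]
    exact le_sup_right (a := f (W ⊔ W')) hv
  obtain ⟨t, rfl⟩ := mem_line hz3 hv' hv3
  exact Submodule.smul_mem _ t ⟨hz, hzA⟩

lemma DD.adj (hW : DD X0 W) (hW' : W' ∈ Ginf (H := H)) (ad : AdjL W W') : DD X0 W' :=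
  ⟨hW'.1, _, ad.sup_right, hW.up ad.sup_left⟩

lemma line_indep (h : OAut f g) (ha : Hall f X0) (hW : DD X0 W) (hW' : DD X0 W') {c : H} (c0 : c ≠ 0)
    (hc : W ≤ (ℂ ∙ c)ᗮ) (hc' : W' ≤ (ℂ ∙ c)ᗮ) (hA : SP f W A) (hA' : SP f W' A') :
    f (W ⊔ ℂ ∙ c) ⊓ Aᗮ ≤ f (W' ⊔ ℂ ∙ c) ⊓ A'ᗮ := by
  have hch := chain_of_ER (ℂ ∙ c) hW.ginf hW'.ginf hc hc' (hW.er hW')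
  have : DD X0 W' ∧ ∀ A', SP f W' A' → f (W ⊔ ℂ ∙ c) ⊓ Aᗮ ≤ f (W' ⊔ ℂ ∙ c) ⊓ A'ᗮ := by
    clear hA' hW' hc'
    induction hch with
    | refl =>
      refine ⟨hW, fun A' hA' => ?_⟩
      obtain ⟨P, Q, R, hP, hQ, -, hPQ, -⟩ := three_star hW.ginf
      have hne : f P ≠ f Q := fun e => hPQ (h.inj (hW.up hP).1 (hW.up hQ).1 e)
      have e : A = A' := by
        rw [← (cov_below (hA.2 P hP) (hA.2 Q hQ) hne).1, (cov_below (hA'.2 P hP) (hA'.2 Q hQ) hne).1]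
      rw [e]
    | @tail Y Z _ hst ih =>
      obtain ⟨dY, hY⟩ := ih
      obtain ⟨-, hZ, cY, cZ, oa⟩ := hst
      have dZ := dY.adj hZ oa.1
      refine ⟨dZ, fun A' hA' => ?_⟩
      obtain ⟨B, hB⟩ := dY.sp ha
      exact (hY B hB).trans (line_step h dY dZ oa c0 cY cZ hB hA')
  exact this.2 A' hA'

def LRep (f : Submodule ℂ H → Submodule ℂ H) (X0 : Submodule ℂ H) (c y : H) : Prop :=
  y ≠ 0 ∧ ∀ W A, DD X0 W → W ≤ (ℂ ∙ c)ᗮ → SP f W A → y ∈ f (W ⊔ ℂ ∙ c) ∧ y ∈ Aᗮ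

lemma exists_rep (h : OAut f g) (hX0 : X0 ∈ Ginf (H := H)) (ha : Hall f X0) {c : H} (c0 : c ≠ 0) :
    ∃ y, LRep f X0 c y := by
  obtain ⟨W, hW, hWc⟩ := exists_DD hX0 (ℂ ∙ c)
  obtain ⟨A, hA⟩ := hW.sp ha
  have hcov := cov_sup (not_mem_of_perp (mem_perp_of hWc) c0)
  obtain ⟨y, hy, hyA, y0, -⟩ := cov_form hA.1 (hA.2 _ hcov)
  exact ⟨y, y0, fun W' A' hW' hc' hA' => line_indep h ha hW hW' c0 hWc hc' hA hA' ⟨hy, hyA⟩⟩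

lemma LRep.form {c y : H} (hr : LRep f X0 c y) (c0 : c ≠ 0) (hW : DD X0 W) (hc : W ≤ (ℂ ∙ c)ᗮ)
    (hA : SP f W A) : W ⋖ W ⊔ ℂ ∙ c ∧ f (W ⊔ ℂ ∙ c) = A ⊔ ℂ ∙ y := by
  have hcov := cov_sup (not_mem_of_perp (mem_perp_of hc) c0)
  obtain ⟨h1, h2⟩ := hr.2 W A hW hc hA
  exact ⟨hcov, eq_sup_of_cov (hA.2 _ hcov) h1 (not_mem_of_perp h2 hr.1)⟩

lemma LRep.orth (h : OAut f g) (hX0 : X0 ∈ Ginf (H := H)) (ha : Hall f X0) {c d y z : H}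
    (c0 : c ≠ 0) (d0 : d ≠ 0) (hy : LRep f X0 c y) (hz : LRep f X0 d z) :
    inner ℂ c d = 0 ↔ inner ℂ y z = 0 := by
  obtain ⟨W, hW, hN⟩ := exists_DD hX0 ((ℂ ∙ c) ⊔ ℂ ∙ d)
  have hc : W ≤ (ℂ ∙ c)ᗮ := hN.trans (Submodule.orthogonal_le le_sup_left)
  have hd : W ≤ (ℂ ∙ d)ᗮ := hN.trans (Submodule.orthogonal_le le_sup_right)
  obtain ⟨A, hA⟩ := hW.sp ha
  obtain ⟨k1, e1⟩ := hy.form c0 hW hc hA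
  obtain ⟨k2, e2⟩ := hz.form d0 hW hd hA
  obtain ⟨y1, yA⟩ := hy.2 W A hW hc hA
  obtain ⟨z1, zA⟩ := hz.2 W A hW hd hA
  have g1 := (hW.up k1).1
  have g2 := (hW.up k2).1
  constructor
  · intro hcd
    have hdX : d ∈ (W ⊔ ℂ ∙ c)ᗮ := by
      rw [← Submodule.inf_orthogonal]; exact ⟨mem_perp_of hd, mem_perp_span.2 hcd⟩
    have o := h.oa _ g1 _ g2 (mkOA k1 hdX d0).2.2
    have i := (o.1.inf_eq (hA.2 _ k1) (hA.2 _ k2).le).1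
    have : y ∈ (f (W ⊔ ℂ ∙ d))ᗮ := o.2 ⟨y1, by rw [i]; exact yA⟩
    exact inner_eq_zero_symm.1 (this z z1)
  · intro hyz
    by_cases e : W ⊔ ℂ ∙ c = W ⊔ ℂ ∙ d
    · exfalso
      rw [← e, e1] at z1
      obtain ⟨t, rfl⟩ := mem_line yA z1 zA
      rw [inner_smul_right, mul_eq_zero] at hyz
      rcases hyz with rfl | hyz
      · exact hz.1 (by simp)
      · exact hy.1 (inner_self_eq_zero.1 hyz)
    · have hzX : z ∈ (f (W ⊔ ℂ ∙ c))ᗮ := by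
        rw [e1, ← Submodule.inf_orthogonal]; exact ⟨zA, mem_perp_span.2 hyz⟩
      have o := (mkOA (hA.2 _ k1) hzX hz.1).2.2
      rw [← e2] at o
      have o' := h.oa' _ (h.fm _ g1) _ (h.fm _ g2) o
      rw [h.gf _ g1, h.gf _ g2] at o'
      have i := (cov_below k1 k2 e).1
      have := o'.2 ⟨le_sup_right (a := W) (mem_span_singleton_self c), by rw [i]; exact mem_perp_of hc⟩
      exact inner_eq_zero_symm.1 (this d (le_sup_right (a := W) (mem_span_singleton_self d)))

lemma SP.inv (h : OAut f g) (hW : W ∈ Ginf (H := H)) (hAG : A ∈ Ginf (H := H)) (hA : SP f W A) :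
    SP g A W := by
  refine ⟨hW.1, fun Y hY => ?_⟩
  have hYG := (ginf_cov hAG.1 hY).1 hAG
  exact hA.back h hW (h.gm _ hYG) (by rw [h.fg _ hYG]; exact hY)

lemma hall_inv (h : OAut f g) (hX0 : X0 ∈ Ginf (H := H)) (ha : Hall f X0) : Hall g (f X0) := by
  obtain ⟨W, hW, hWX⟩ := exists_hyper hX0
  have dW : DD X0 W := ⟨hW, X0, hWX, hX0, ER.refl hX0.1⟩
  obtain ⟨A, hA⟩ := dW.sp ha
  exact hall_of h.symm (h.fm _ hX0) hA.1 (hA.2 _ hWX) ⟨W, hA.inv h dW.ginf (hA.ginf dW h)⟩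

lemma rep_surj (h : OAut f g) (hX0 : X0 ∈ Ginf (H := H)) (ha : Hall f X0) {y : H} (y0 : y ≠ 0) :
    ∃ c, c ≠ 0 ∧ ∀ z, LRep f X0 c z → ∃ t : ℂ, y = t • z := by
  have ha' := hall_inv h hX0 ha
  obtain ⟨A, dA, hAy⟩ := exists_DD (h.fm _ hX0) (ℂ ∙ y)
  obtain ⟨W, hW⟩ := dA.sp ha'
  have hWG := hW.ginf dA h.symm
  have hA := hW.inv h.symm dA.ginf hWG
  have hcov := cov_sup (not_mem_of_perp (mem_perp_of hAy) y0)
  obtain ⟨gY, erY⟩ := dA.up hcov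
  have hWX := hW.2 _ hcov
  have er := er_map h.symm (h.fm _ hX0) gY erY
  rw [h.gf _ hX0] at er
  have dW : DD X0 W := ⟨hWG.1, _, hWX, h.gm _ gY, er⟩
  obtain ⟨c, hcX, hcW, c0, eX⟩ := cov_form hWG.1 hWX
  refine ⟨c, c0, fun z hz => ?_⟩
  have e1 := (hz.form c0 dW (le_perp_of hcW) hA).2
  rw [← eX, h.fg _ gY] at e1
  have hyz : y ∈ A ⊔ ℂ ∙ z := by
    rw [← e1]; exact le_sup_right (a := A) (mem_span_singleton_self y)
  exact mem_line (hz.2 W A dW (le_perp_of hcW) hA).2 hyz (mem_perp_of hAy)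

lemma rep_mem (ha : Hall f X0) (hX : X ∈ Ginf (H := H)) (er : ER X0 X)
    {c y : H} (c0 : c ≠ 0) (hc : c ∈ X) (hy : LRep f X0 c y) : y ∈ f X := by
  have hcov := hyper_cov hc c0
  have dW : DD X0 (X ⊓ (ℂ ∙ c)ᗮ) := ⟨isClosed_inf hX.1 (closed_perp _), X, hcov, hX, er⟩
  obtain ⟨A, hA⟩ := dW.sp ha
  have := (hy.2 _ A dW inf_le_right hA).1
  rwa [← eq_sup_of_cov hcov hc (not_mem_of_perp (mem_perp_of inf_le_right) c0)] at this

lemma rep_perp (h : OAut f g) (hX0 : X0 ∈ Ginf (H := H)) (ha : Hall f X0) (hX : X ∈ Ginf (H := H))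
    (er : ER X0 X) {c y : H} (c0 : c ≠ 0) (hc : c ∈ Xᗮ) (hy : LRep f X0 c y) : y ∈ (f X)ᗮ := by
  obtain ⟨W, hW, hWX⟩ := exists_hyper hX
  have dW : DD X0 W := ⟨hW, X, hWX, hX, er⟩
  obtain ⟨A, hA⟩ := dW.sp ha
  obtain ⟨x, hxX, hxW, x0, eX⟩ := cov_form hW hWX
  obtain ⟨z, hz⟩ := exists_rep h hX0 ha x0
  have e1 := (hz.form x0 dW (le_perp_of hxW) hA).2
  rw [eX, e1, ← Submodule.inf_orthogonal]
  refine ⟨(hy.2 W A dW (hWX.le.trans (le_perp_of hc)) hA).2, mem_perp_span.2 ?_⟩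
  exact (LRep.orth h hX0 ha x0 c0 hz hy).1 (hc x hxX)

end

section
variable {f g : Submodule ℂ H → Submodule ℂ H} {X0 : Submodule ℂ H}

lemma main_phi (h : OAut f g) (hX0 : X0 ∈ Ginf (H := H)) (ha : Hall f X0) :
    ∃ φ : H → H, (∀ x y, inner ℂ x y = 0 ↔ inner ℂ (φ x) (φ y) = 0) ∧
      (∀ y, ∃ x, ∃ t : ℂ, y = t • φ x) ∧
      ∀ X ∈ Ginf (H := H), ER X0 X → ∀ x, (x ∈ X → φ x ∈ f X) ∧ (x ∈ Xᗮ → φ x ∈ (f X)ᗮ) := by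
  have hex : ∀ c : H, ∃ y : H, (c = 0 → y = 0) ∧ (c ≠ 0 → LRep f X0 c y) := by
    intro c
    by_cases c0 : c = 0
    · exact ⟨0, fun _ => rfl, fun h => absurd c0 h⟩
    · obtain ⟨y, hy⟩ := exists_rep h hX0 ha c0
      exact ⟨y, fun h => absurd h c0, fun _ => hy⟩
  choose φ hφ0 hφ using hex
  refine ⟨φ, fun x y => ?_, fun y => ?_, fun X hX er x => ?_⟩
  · by_cases x0 : x = 0
    · rw [hφ0 x x0, x0]; simp
    by_cases y0 : y = 0
    · rw [hφ0 y y0, y0]; simp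
    exact LRep.orth h hX0 ha x0 y0 (hφ x x0) (hφ y y0)
  · by_cases y0 : y = 0
    · exact ⟨0, 0, by simp [y0]⟩
    obtain ⟨c, c0, hc⟩ := rep_surj h hX0 ha y0
    exact ⟨c, hc _ (hφ c c0)⟩
  · by_cases x0 : x = 0
    · rw [hφ0 x x0]
      exact ⟨fun _ => Submodule.zero_mem _, fun _ => Submodule.zero_mem _⟩
    · exact ⟨fun hx => rep_mem ha hX er x0 hx (hφ x x0), fun hx => rep_perp h hX0 ha hX er x0 hx (hφ x x0)⟩

lemma main_set {X F : Submodule ℂ H} (hX : IsClosed (X : Set H)) (U : H → H)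
    (hadd : ∀ x y, U (x + y) = U x + U y) (hs : Function.Surjective U)
    (h1 : ∀ x ∈ X, U x ∈ F) (h2 : ∀ x ∈ Xᗮ, U x ∈ Fᗮ) (y : H) : y ∈ F ↔ ∃ x ∈ X, U x = y := by
  constructor
  · intro hy
    obtain ⟨z, rfl⟩ := hs y
    have := hop hX
    obtain ⟨p, hp, q, hq, rfl⟩ := X.exists_add_mem_mem_orthogonal z
    have e := hadd p q
    have hq' : U q ∈ F := by
      have := F.sub_mem hy (h1 p hp)
      rw [e] at this
      simpa using this
    have : U q = 0 := inner_self_eq_zero.1 (h2 q hq _ hq')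
    exact ⟨p, hp, by rw [e, this, add_zero]⟩
  · rintro ⟨x, hx, rfl⟩
    exact h1 x hx

lemma main_U (hH : ¬FiniteDimensional ℂ H) (h : OAut f g) (hX0 : X0 ∈ Ginf (H := H)) (ha : Hall f X0) :
    (∃ U : H ≃ₗᵢ[ℂ] H, ∀ X ∈ Ginf (H := H), ER X0 X → f X = X.map U.toLinearEquiv.toLinearMap) ∨
    (∃ U : H ≃ₗᵢ⋆[ℂ] H, ∀ X ∈ Ginf (H := H), ER X0 X → f X = X.map U.toLinearEquiv.toLinearMap) := by
  obtain ⟨φ, h1, h2, h3⟩ := main_phi h hX0 ha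
  rcases uhlhorn hH φ h1 h2 with ⟨U, hU⟩ | ⟨U, hU⟩
  · refine Or.inl ⟨U, fun X hX er => ?_⟩
    ext y
    rw [main_set hX.1 U (map_add U) U.surjective (F := f X) ?_ ?_ y]
    · rfl
    · intro x hx
      obtain ⟨t, ht⟩ := hU x
      rw [ht]; exact Submodule.smul_mem _ t ((h3 X hX er x).1 hx)
    · intro x hx
      obtain ⟨t, ht⟩ := hU x
      rw [ht]; exact Submodule.smul_mem _ t ((h3 X hX er x).2 hx)
  · refine Or.inr ⟨U, fun X hX er => ?_⟩
    ext y
    rw [main_set hX.1 U (map_add U) U.surjective (F := f X) ?_ ?_ y]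
    · rfl
    · intro x hx
      obtain ⟨t, ht⟩ := hU x
      rw [ht]; exact Submodule.smul_mem _ t ((h3 X hX er x).1 hx)
    · intro x hx
      obtain ⟨t, ht⟩ := hU x
      rw [ht]; exact Submodule.smul_mem _ t ((h3 X hX er x).2 hx)

end

/-- a bijective transformation of `G_∞(H)` preserving ortho-adjacency in both
directions is, on every `A`-component, induced by a unitary or anti-unitary operator, possibly
composed with the orthocomplementary map. -/
theorem stmt0 (hH : ¬FiniteDimensional ℂ H)
    (f : Submodule ℂ H → Submodule ℂ H)
    (hbij : Set.BijOn f (Ginf (H := H)) (Ginf (H := H)))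
    (hf : ∀ X ∈ Ginf (H := H), ∀ Y ∈ Ginf (H := H),
      OrthoAdjacent X Y ↔ OrthoAdjacent (f X) (f Y))
    (C : Set (Submodule ℂ H)) (hC : IsAComponent C) :
    (∃ U : H ≃ₗᵢ[ℂ] H, ∀ X ∈ C, f X = X.map U.toLinearEquiv.toLinearMap) ∨
    (∃ U : H ≃ₗᵢ⋆[ℂ] H, ∀ X ∈ C, f X = X.map U.toLinearEquiv.toLinearMap) ∨
    (∃ U : H ≃ₗᵢ[ℂ] H, ∀ X ∈ C, f X = (X.map U.toLinearEquiv.toLinearMap)ᗮ) ∨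
    (∃ U : H ≃ₗᵢ⋆[ℂ] H, ∀ X ∈ C, f X = (X.map U.toLinearEquiv.toLinearMap)ᗮ) := by
  rcases C.eq_empty_or_nonempty with rfl | ⟨X0, hX0C⟩
  · exact Or.inl ⟨LinearIsometryEquiv.refl ℂ H, by simp⟩
  have hX0 := hC.1 hX0C
  have hinv := hbij.invOn_invFunOn
  have hgm : ∀ X ∈ Ginf (H := H), Function.invFunOn f (Ginf (H := H)) X ∈ Ginf (H := H) :=
    fun X hX => hbij.surjOn.mapsTo_invFunOn hX
  have h : OAut f (Function.invFunOn f (Ginf (H := H))) := by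
    refine ⟨hbij.mapsTo, hgm, hinv.2, hinv.1, ?_, ?_⟩
    · intro X hX Y hY hXY
      rw [← oa_iff (hbij.mapsTo hX).1 (hbij.mapsTo hY).1, ← hf X hX Y hY, oa_iff hX.1 hY.1]
      exact hXY
    · intro X hX Y hY hXY
      rw [← oa_iff (hgm X hX).1 (hgm Y hY).1, hf _ (hgm X hX) _ (hgm Y hY), hinv.2 hX, hinv.2 hY,
        oa_iff hX.1 hY.1]
      exact hXY
  have her : ∀ X ∈ C, ER X0 X := by
    intro X hX
    obtain ⟨n, h1, h2⟩ := hC.2.1 X0 hX0C X hX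
    exact ⟨_, n, isClosed_inf hX0.1 (hC.1 hX).1, h1, h2⟩
  rcases dichot h hX0 with ha | ha
  · rcases main_U hH h hX0 ha with ⟨U, hU⟩ | ⟨U, hU⟩
    · exact Or.inl ⟨U, fun X hX => hU X (hC.1 hX) (her X hX)⟩
    · exact Or.inr (Or.inl ⟨U, fun X hX => hU X (hC.1 hX) (her X hX)⟩)
  · rcases main_U hH h.perp hX0 ha with ⟨U, hU⟩ | ⟨U, hU⟩
    · refine Or.inr (Or.inr (Or.inl ⟨U, fun X hX => ?_⟩))
      rw [← hU X (hC.1 hX) (her X hX)]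
      exact (perp_perp (hbij.mapsTo (hC.1 hX)).1).symm
    · refine Or.inr (Or.inr (Or.inr ⟨U, fun X hX => ?_⟩))
      rw [← hU X (hC.1 hX) (her X hX)]
      exact (perp_perp (hbij.mapsTo (hC.1 hX)).1).symm
end

section
/- Let X, Y ∈ G_∞(H) be distinct subspaces which are not ortho-adjacent, and suppose there exists Z ∈ G_∞(H) ortho-adjacent to both X and Y. Then either X and Y are adjacent, or X ∩ Y has codimension 2 in both X and Y. -/
open Module Submodule Classical

variable {H : Type*} [NormedAddCommGroup H] [InnerProductSpace ℂ H] [CompleteSpace H]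

theorem cod_iff (W X : Submodule ℂ H) (n : ℕ) :
    CodimIn W X n ↔ W ≤ X ∧ Module.rank ℂ (↥X ⧸ W.comap X.subtype) = n := by
  unfold CodimIn
  constructor
  · rintro ⟨h, hf, hn⟩
    exact ⟨h, by rw [← hn, finrank_eq_rank]⟩
  · rintro ⟨h, hn⟩
    have : FiniteDimensional ℂ (↥X ⧸ W.comap X.subtype) :=
      Module.rank_lt_aleph0_iff.mp (by rw [hn]; exact Cardinal.natCast_lt_aleph0)
    exact ⟨h, this, finrank_eq_of_rank_eq hn⟩

theorem cod_add (A B C : Submodule ℂ H) (h1 : A ≤ B) (h2 : B ≤ C) :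
    Module.rank ℂ (↥B ⧸ A.comap B.subtype) + Module.rank ℂ (↥C ⧸ B.comap C.subtype) =
      Module.rank ℂ (↥C ⧸ A.comap C.subtype) := by
  have hle : A.comap C.subtype ≤ B.comap C.subtype := Submodule.comap_mono h1
  let f := Submodule.factor hle
  let g : (↥B ⧸ A.comap B.subtype) →ₗ[ℂ] (↥C ⧸ A.comap C.subtype) :=
    Submodule.mapQ _ _ (Submodule.inclusion h2) (fun x hx => hx)
  have hg : Function.Injective g := by
    rw [← LinearMap.ker_eq_bot, LinearMap.ker_eq_bot']
    intro x hx
    obtain ⟨x, rfl⟩ := Submodule.Quotient.mk_surjective _ x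
    rw [Submodule.Quotient.mk_eq_zero]
    have hx : Submodule.Quotient.mk (p := A.comap C.subtype) (Submodule.inclusion h2 x) = 0 := hx
    rw [Submodule.Quotient.mk_eq_zero] at hx
    exact hx
  have hk : LinearMap.ker f = LinearMap.range g := by
    ext x
    obtain ⟨x, rfl⟩ := Submodule.Quotient.mk_surjective _ x
    constructor
    · intro hx
      have hx' : (x : H) ∈ B := by
        have : Submodule.Quotient.mk (p := B.comap C.subtype) x = 0 := hx
        simpa using this
      exact ⟨Submodule.Quotient.mk ⟨x, hx'⟩, rfl⟩
    · rintro ⟨y, hy⟩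
      obtain ⟨y, rfl⟩ := Submodule.Quotient.mk_surjective _ y
      rw [← hy]
      change Submodule.Quotient.mk (p := B.comap C.subtype) (Submodule.inclusion h2 y) = 0
      rw [Submodule.Quotient.mk_eq_zero]
      exact y.2
  have h := LinearMap.rank_range_add_rank_ker f
  rw [hk, rank_range_of_surjective f (Submodule.factor_surjective hle),
    ← (LinearEquiv.ofInjective g hg).rank_eq] at h
  rw [← h, add_comm]

theorem cod_trans {A B C : Submodule ℂ H} {m n : ℕ} (h1 : CodimIn A B m) (h2 : CodimIn B C n) :
    CodimIn A C (m + n) := by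
  rw [cod_iff] at *
  refine ⟨h1.1.trans h2.1, ?_⟩
  rw [← cod_add A B C h1.1 h2.1, h1.2, h2.2]; simp

theorem cod_split {A B C : Submodule ℂ H} {k : ℕ} (h : CodimIn A C k) (h1 : A ≤ B) (h2 : B ≤ C) :
    ∃ m n, m + n = k ∧ CodimIn A B m ∧ CodimIn B C n := by
  simp only [cod_iff] at *
  have e := cod_add A B C h1 h2
  rw [h.2] at e
  obtain ⟨m, hm⟩ := Cardinal.lt_aleph0.mp
    (lt_of_le_of_lt (e ▸ self_le_add_right _ _) (Cardinal.natCast_lt_aleph0 (n := k)))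
  obtain ⟨n, hn⟩ := Cardinal.lt_aleph0.mp
    (lt_of_le_of_lt (e ▸ self_le_add_left _ _) (Cardinal.natCast_lt_aleph0 (n := k)))
  rw [hm, hn] at e
  exact ⟨m, n, by exact_mod_cast e, ⟨h1, hm⟩, h2, hn⟩

theorem cod_uniq {A B : Submodule ℂ H} {m n : ℕ} (h1 : CodimIn A B m) (h2 : CodimIn A B n) :
    m = n := h1.2.2.symm.trans h2.2.2

theorem cod_zero {A B : Submodule ℂ H} (h1 : CodimIn A B 0) : A = B := by
  obtain ⟨h, hf, hn⟩ := h1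
  refine le_antisymm h fun x hx => ?_
  have := Module.finrank_zero_iff.mp hn
  have h0 : Submodule.Quotient.mk (p := A.comap B.subtype) ⟨x, hx⟩ = 0 := Subsingleton.elim _ _
  simpa using h0

theorem cod_inf {A B Z : Submodule ℂ H} {n : ℕ} (h1 : CodimIn A Z n) (h2 : B ≤ Z) :
    ∃ m, m ≤ n ∧ CodimIn (A ⊓ B) B m := by
  obtain ⟨h, hf, hn⟩ := h1
  let g : (↥B ⧸ (A ⊓ B).comap B.subtype) →ₗ[ℂ] (↥Z ⧸ A.comap Z.subtype) :=
    Submodule.mapQ _ _ (Submodule.inclusion h2) (fun x hx => hx.1)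
  have hg : Function.Injective g := by
    rw [← LinearMap.ker_eq_bot, LinearMap.ker_eq_bot']
    intro x hx
    obtain ⟨x, rfl⟩ := Submodule.Quotient.mk_surjective _ x
    rw [Submodule.Quotient.mk_eq_zero]
    have hx : Submodule.Quotient.mk (p := A.comap Z.subtype) (Submodule.inclusion h2 x) = 0 := hx
    rw [Submodule.Quotient.mk_eq_zero] at hx
    exact ⟨hx, x.2⟩
  exact ⟨_, hn ▸ LinearMap.finrank_le_finrank_of_injective hg, inf_le_right,
    FiniteDimensional.of_injective g hg, rfl⟩

/-- if distinct `X, Y ∈ G_∞(H)` are not ortho-adjacent but some `Z ∈ G_∞(H)` is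
ortho-adjacent to both, then either `X, Y` are adjacent or `X ∩ Y` has codimension 2 in both. -/
theorem stmt1 (hH : ¬FiniteDimensional ℂ H) (X Y : Submodule ℂ H)
    (hX : X ∈ Ginf (H := H)) (hY : Y ∈ Ginf (H := H)) (hne : X ≠ Y)
    (hnoa : ¬OrthoAdjacent X Y)
    (hZ : ∃ Z ∈ Ginf (H := H), OrthoAdjacent Z X ∧ OrthoAdjacent Z Y) :
    Adjacent X Y ∨ (CodimIn (X ⊓ Y) X 2 ∧ CodimIn (X ⊓ Y) Y 2) := by
  obtain ⟨Z, -, ⟨⟨hZ1, hX1⟩, -⟩, ⟨⟨hZ2, hY1⟩, -⟩⟩ := hZ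
  -- W = (Z ⊓ X) ⊓ (Z ⊓ Y)
  obtain ⟨m, hm, hW⟩ := cod_inf hZ1 (inf_le_left : Z ⊓ Y ≤ Z)
  have hWY := cod_trans hW hY1
  have hWZ := cod_trans hW hZ2
  obtain ⟨a, b, hab, hA, hB⟩ := cod_split hWZ (inf_le_left : _ ≤ Z ⊓ X) inf_le_left
  have hb := cod_uniq hB hZ1
  have hWX := cod_trans hA hX1
  have hle : (Z ⊓ X) ⊓ (Z ⊓ Y) ≤ X ⊓ Y := inf_le_inf inf_le_right inf_le_right
  obtain ⟨d, p, h1, hd, hp⟩ := cod_split hWX hle inf_le_left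
  obtain ⟨d', q, h2, hd', hq⟩ := cod_split hWY hle inf_le_right
  have := cod_uniq hd hd'
  have hpq : q = p := by omega
  subst hpq
  have hq2 : q ≤ 2 := by omega
  interval_cases q
  · exact absurd ((cod_zero hp).symm.trans (cod_zero hq)) hne
  · exact Or.inl ⟨hp, hq⟩
  · exact Or.inr ⟨hp, hq⟩
end

section
/- Let X, Y ∈ G_∞(H) be subspaces such that X ∩ Y has codimension 2 in both X and Y. If there exist Z, Z' ∈ G_∞(H) which are ortho-adjacent to each other and such that each of Z, Z' is ortho-adjacent to both X and Y, then X and Y are compatible. -/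
open Module Submodule Classical

variable {H : Type*} [NormedAddCommGroup H] [InnerProductSpace ℂ H] [CompleteSpace H]

def HypIn {H : Type*} [NormedAddCommGroup H] [InnerProductSpace ℂ H]
    (W X : Submodule ℂ H) : Prop :=
  W ≤ X ∧ (∃ x ∈ X, x ∉ W) ∧ ∀ x ∈ X, x ∉ W → ∀ a ∈ X, ∃ c : ℂ, a - c • x ∈ W

theorem CodimIn.hyp {W X : Submodule ℂ H} (h : CodimIn W X 1) : HypIn W X := by
  obtain ⟨h1, h2, h3⟩ := h
  refine ⟨h1, ?_, ?_⟩
  · by_contra hc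
    push Not at hc
    have : W.comap X.subtype = ⊤ := by
      ext ⟨a, ha⟩
      simpa using hc a ha
    have hs : Subsingleton (↥X ⧸ W.comap X.subtype) :=
      Submodule.Quotient.subsingleton_iff.2 this
    have := Module.finrank_zero_of_subsingleton (R := ℂ) (M := ↥X ⧸ W.comap X.subtype)
    omega
  · intro x hx hxW a ha
    have hne : (Submodule.Quotient.mk (⟨x, hx⟩ : X) : ↥X ⧸ W.comap X.subtype) ≠ 0 := by
      rw [Ne, Submodule.Quotient.mk_eq_zero]
      simpa using hxW
    obtain ⟨c, hc⟩ := (finrank_eq_one_iff_of_nonzero' _ hne).1 h3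
      (Submodule.Quotient.mk (⟨a, ha⟩ : X))
    refine ⟨c, ?_⟩
    rw [← Submodule.Quotient.mk_smul, eq_comm, Submodule.Quotient.eq] at hc
    simpa using hc

theorem CodimIn.two {W X : Submodule ℂ H} (h : CodimIn W X 2) :
    ¬ ∃ x ∈ X, ∀ a ∈ X, ∃ c : ℂ, a - c • x ∈ W := by
  rintro ⟨x, hx, hxa⟩
  obtain ⟨h1, h2, h3⟩ := h
  have := finrank_le_one (R := ℂ)
    (Submodule.Quotient.mk (⟨x, hx⟩ : X) : ↥X ⧸ W.comap X.subtype) (by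
      intro w
      obtain ⟨⟨a, ha⟩, rfl⟩ := Submodule.Quotient.mk_surjective _ w
      obtain ⟨c, hc⟩ := hxa a ha
      refine ⟨c, ?_⟩
      rw [← Submodule.Quotient.mk_smul, eq_comm, Submodule.Quotient.eq]
      simpa using hc)
  omega

theorem projCLM_mem {K : Submodule ℂ H} (z : H) : projCLM K z ∈ K := by
  unfold projCLM
  split_ifs with h <;> simp

theorem projCLM_inner {K : Submodule ℂ H} (hK : IsClosed (K : Set H)) (z : H) {k : H}
    (hk : k ∈ K) : inner ℂ k (projCLM K z) = inner ℂ k z := by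
  haveI : CompleteSpace K := hK.completeSpace_coe
  have h : projCLM K z = K.starProjection z := by
    unfold projCLM
    rw [dif_pos hK]
    rfl
  have h2 := K.sub_starProjection_mem_orthogonal z
  have := (Submodule.mem_orthogonal _ _).1 h2 k hk
  rw [inner_sub_right, sub_eq_zero] at this
  rw [h, this]

theorem projCLM_uniq {K : Submodule ℂ H} (hK : IsClosed (K : Set H)) {z w : H}
    (hw : w ∈ K) (h : ∀ k ∈ K, inner ℂ k w = inner ℂ k z) : projCLM K z = w := by
  have hm : projCLM K z - w ∈ K := K.sub_mem (projCLM_mem z) hw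
  have : inner ℂ (projCLM K z - w) (projCLM K z - w) = 0 := by
    rw [inner_sub_right (𝕜 := ℂ) (projCLM K z - w), projCLM_inner hK z hm, h _ hm, sub_self]
  exact sub_eq_zero.1 (inner_self_eq_zero.1 this)

theorem projCLM_self {K : Submodule ℂ H} (hK : IsClosed (K : Set H)) {z : H} (hz : z ∈ K) :
    projCLM K z = z := projCLM_uniq hK hz fun _ _ => rfl

theorem Compatible.mem {K L : Submodule ℂ H} (h : Compatible K L)
    (hK : IsClosed (K : Set H)) {z : H} (hz : z ∈ K) : projCLM L z ∈ K := by
  have := congrArg (fun f : H →L[ℂ] H => f z) h.eq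
  simp only [ContinuousLinearMap.mul_apply] at this
  rw [projCLM_self hK hz] at this
  rw [← this]
  exact projCLM_mem _

theorem compat_of {K L : Submodule ℂ H} (hK : IsClosed (K : Set H))
    (hL : IsClosed (L : Set H)) (h : ∀ y ∈ L, projCLM K y ∈ L) : Compatible K L := by
  unfold Compatible
  rw [commute_iff_eq]
  ext z
  simp only [ContinuousLinearMap.mul_apply]
  symm
  refine projCLM_uniq hL (h _ (projCLM_mem z)) fun k hk => ?_
  have sym : ∀ a b : H, inner ℂ a (projCLM K b) = inner ℂ (projCLM K a) b := by
    intro a b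
    rw [← projCLM_inner hK b (projCLM_mem a), ← inner_conj_symm,
      ← projCLM_inner hK a (projCLM_mem b), inner_conj_symm]
  rw [sym, sym, projCLM_inner hL _ (h k hk)]

theorem Compatible.symm' {K L : Submodule ℂ H} (h : Compatible K L) : Compatible L K :=
  Commute.symm h

theorem struct_lem {X Y Z : Submodule ℂ H} (h1 : HypIn (Z ⊓ X) X) (h2 : HypIn (Z ⊓ Y) Z)
    (n2 : ¬ ∃ x ∈ X, ∀ a ∈ X, ∃ c : ℂ, a - c • x ∈ X ⊓ Y) :
    X ⊓ Y ≤ Z ∧ HypIn (X ⊓ Y) (X ⊓ Z) := by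
  have hex : ∃ a ∈ X ⊓ Z, a ∉ Y := by
    by_contra hc
    push Not at hc
    obtain ⟨x, hx, hxn⟩ := h1.2.1
    apply n2
    refine ⟨x, hx, fun a ha => ?_⟩
    obtain ⟨c, hc'⟩ := h1.2.2 x hx hxn a ha
    exact ⟨c, hc'.2, hc _ ⟨hc'.2, hc'.1⟩⟩
  have hWZ : X ⊓ Y ≤ Z := by
    intro w hw
    by_contra hwZ
    obtain ⟨a, ha, haY⟩ := hex
    apply n2
    refine ⟨a, ha.1, fun q hq => ?_⟩
    obtain ⟨c, hc⟩ := h1.2.2 w hw.1 (fun h => hwZ h.1) q hq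
    obtain ⟨d, hd⟩ := h2.2.2 a ha.2 (fun h => haY h.2) _ hc.1
    refine ⟨d, X.sub_mem hq (X.smul_mem _ ha.1), ?_⟩
    change q - d • a ∈ Y
    have := Y.add_mem hd.2 (Y.smul_mem c hw.2)
    convert this using 1
    abel
  refine ⟨hWZ, fun w hw => ⟨hw.1, hWZ hw⟩, ?_, ?_⟩
  · obtain ⟨a, ha, haY⟩ := hex
    exact ⟨a, ha, fun h => haY h.2⟩
  · intro x hx hxn a ha
    obtain ⟨c, hc⟩ := h2.2.2 x hx.2 (fun h => hxn ⟨hx.1, h.2⟩) a ha.2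
    exact ⟨c, X.sub_mem ha.1 (X.smul_mem _ hx.1), hc.2⟩

theorem core_lem {X Y Z Z' : Submodule ℂ H} (cX : IsClosed (X : Set H))
    (cY : IsClosed (Y : Set H)) (cZ : IsClosed (Z : Set H)) (cZ' : IsClosed (Z' : Set H))
    (kZX : Compatible Z X) (kZY : Compatible Z Y) (kZX' : Compatible Z' X)
    (kZY' : Compatible Z' Y) (hWZ : X ⊓ Y ≤ Z) (hWZ' : X ⊓ Y ≤ Z')
    (hA : HypIn (X ⊓ Y) (X ⊓ Z)) (hA' : HypIn (X ⊓ Y) (X ⊓ Z'))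
    (hB : HypIn (X ⊓ Y) (Y ⊓ Z)) (hB' : HypIn (X ⊓ Y) (Y ⊓ Z'))
    (hZ : HypIn (Z ⊓ Y) Z) (hY : HypIn (Z' ⊓ Y) Y) (hne : ∃ z ∈ Z, z ∉ Z')
    (hx : ∃ x ∈ X, x ∈ Z ∧ x ∈ Z' ∧ x ∉ Y) : Compatible X Y := by
  obtain ⟨x0, x0X, x0Z, x0Z', x0Y⟩ := hx
  have cW : IsClosed ((X ⊓ Y : Submodule ℂ H) : Set H) := cX.inter cY
  obtain ⟨x, hx, xX, xZ, xZ', xY⟩ : ∃ x, (∀ w ∈ X ⊓ Y, inner ℂ w x = 0) ∧ x ∈ X ∧ x ∈ Z ∧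
      x ∈ Z' ∧ x ∉ Y := by
    have hp := projCLM_mem (K := X ⊓ Y) x0
    refine ⟨x0 - projCLM (X ⊓ Y) x0, fun w hw => ?_, X.sub_mem x0X hp.1,
      Z.sub_mem x0Z (hWZ hp), Z'.sub_mem x0Z' (hWZ' hp), fun h => x0Y ?_⟩
    · rw [inner_sub_right, projCLM_inner cW _ hw, sub_self]
    · simpa using Y.add_mem h hp.2
  have key : ∀ b ∈ Y, b ∈ Z → b ∈ Z' → b ∈ X ⊓ Y := by
    intro b bY bZ bZ'
    by_contra hb
    obtain ⟨z, zZ, zZ'⟩ := hne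
    apply zZ'
    obtain ⟨c, hc⟩ := hZ.2.2 x xZ (fun h => xY h.2) z zZ
    obtain ⟨d, hd⟩ := hB.2.2 b ⟨bY, bZ⟩ hb _ ⟨hc.2, hc.1⟩
    have := Z'.add_mem (Z'.add_mem (hWZ' hd) (Z'.smul_mem d bZ')) (Z'.smul_mem c xZ')
    simpa using this
  have hPx : projCLM Y x ∈ X ⊓ Y :=
    key _ (projCLM_mem x) (kZY.mem cZ xZ) (kZY'.mem cZ' xZ')
  have hPx0 : projCLM Y x = 0 := by
    rw [← inner_self_eq_zero (𝕜 := ℂ), projCLM_inner cY _ hPx.2, hx _ hPx]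
  have hxY : ∀ y ∈ Y, inner ℂ x y = 0 := by
    intro y hy
    rw [← inner_conj_symm, ← projCLM_inner cY x hy, hPx0]
    simp
  have x0 : x ≠ 0 := fun h => xY (h ▸ Y.zero_mem)
  have gen : ∀ V : Submodule ℂ H, HypIn (X ⊓ Y) (X ⊓ V) → x ∈ V → Compatible V X →
      IsClosed (V : Set H) → ∀ y ∈ Y, y ∈ V → projCLM X y ∈ X ⊓ Y := by
    intro V hV xV kV cV y hy yV
    obtain ⟨c, hc⟩ := hV.2.2 x ⟨xX, xV⟩ (fun h => xY h.2) (projCLM X y)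
      ⟨projCLM_mem y, kV.mem cV yV⟩
    have e := hxY _ hc.2
    rw [inner_sub_right, projCLM_inner cX _ xX, hxY y hy, inner_smul_right, zero_sub,
      neg_eq_zero, mul_eq_zero, inner_self_eq_zero] at e
    have : c = 0 := e.resolve_right x0
    simpa [this] using hc
  refine compat_of cX cY fun q hq => ?_
  obtain ⟨y, hy, hyW⟩ := hB.2.1
  have hyZ' : y ∉ Z' := fun h => hyW (key y hy.1 hy.2 h)
  obtain ⟨c, hc⟩ := hY.2.2 y hy.1 (fun h => hyZ' h.1) q hq
  have h1 := (gen Z' hA' xZ' kZX' cZ' _ hc.2 hc.1).2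
  have h2 := (gen Z hA xZ kZX cZ y hy.1 hy.2).2
  have := Y.add_mem h1 (Y.smul_mem c h2)
  simpa using this

/-- if `X ∩ Y` has codimension 2 in both `X, Y ∈ G_∞(H)` and there exist
ortho-adjacent `Z, Z' ∈ G_∞(H)` each ortho-adjacent to both `X` and `Y`, then `X` and `Y`
are compatible. -/
theorem stmt4 (hH : ¬FiniteDimensional ℂ H) (X Y : Submodule ℂ H)
    (hX : X ∈ Ginf (H := H)) (hY : Y ∈ Ginf (H := H))
    (h2X : CodimIn (X ⊓ Y) X 2) (h2Y : CodimIn (X ⊓ Y) Y 2)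
    (hex : ∃ Z ∈ Ginf (H := H), ∃ Z' ∈ Ginf (H := H), OrthoAdjacent Z Z' ∧
      OrthoAdjacent Z X ∧ OrthoAdjacent Z Y ∧ OrthoAdjacent Z' X ∧ OrthoAdjacent Z' Y) :
    Compatible X Y := by
  obtain ⟨Z, gZ, Z', gZ', ⟨⟨a1, -⟩, -⟩, ⟨⟨b1, b2⟩, kZX⟩, ⟨⟨d1, d2⟩, kZY⟩,
    ⟨⟨e1, e2⟩, kZX'⟩, ⟨⟨f1, f2⟩, kZY'⟩⟩ := hex
  have n1 := h2X.two
  have n2 := h2Y.two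
  rw [inf_comm X Y] at n2
  obtain ⟨w1, hA⟩ := struct_lem b2.hyp d1.hyp n1
  obtain ⟨w2, hA'⟩ := struct_lem e2.hyp f1.hyp n1
  obtain ⟨w1', hB⟩ := struct_lem d2.hyp b1.hyp n2
  obtain ⟨w2', hB'⟩ := struct_lem f2.hyp e1.hyp n2
  have hZZ := a1.hyp
  have hne : ∃ z ∈ Z, z ∉ Z' := by
    obtain ⟨z, h, h'⟩ := hZZ.2.1
    exact ⟨z, h, fun k => h' ⟨h, k⟩⟩
  obtain ⟨x, hx, hxW⟩ := hA.2.1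
  obtain ⟨y, hy, hyW⟩ := hB.2.1
  by_cases hxZ : x ∈ Z'
  · exact core_lem hX.1 hY.1 gZ.1 gZ'.1 kZX kZY kZX' kZY' w1 w2 hA hA'
      (inf_comm X Y ▸ hB) (inf_comm X Y ▸ hB') d1.hyp f2.hyp hne
      ⟨x, hx.1, hx.2, hxZ, fun h => hxW ⟨hx.1, h⟩⟩
  by_cases hyZ : y ∈ Z'
  · exact (core_lem hY.1 hX.1 gZ.1 gZ'.1 kZY kZX kZY' kZX' w1' w2' hB hB'
      (inf_comm X Y ▸ hA) (inf_comm X Y ▸ hA') b1.hyp e2.hyp hne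
      ⟨y, hy.1, hy.2, hyZ, fun h => hyW ⟨hy.1, h⟩⟩).symm'
  exfalso
  obtain ⟨c, hc⟩ := hZZ.2.2 x hx.2 (fun h => hxZ h.2) y hy.2
  obtain ⟨u, hu, huW⟩ := hA'.2.1
  -- `p = y - c x ∈ Z'`; subtract a multiple of `u` to land in `Y`
  obtain ⟨α, hα⟩ := f1.hyp.2.2 u hu.2 (fun h => huW ⟨hu.1, h.2⟩) _ hc.2
  have hX' : c • x + α • u ∈ X := X.add_mem (X.smul_mem _ hx.1) (X.smul_mem _ hu.1)
  have hY' : c • x + α • u ∈ Y := by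
    have := Y.sub_mem hy.1 hα.2
    convert this using 1
    abel
  apply hyZ
  have := Z'.add_mem hα.1 (w2 ⟨hX', hY'⟩)
  convert this using 1
  abel
end

section
/- Let X, Y ∈ G_∞(H) be subspaces such that X ∩ Y has codimension 2 in both X and Y, and let Z, Z' ∈ G_∞(H) be ortho-adjacent to each other and such that each of Z, Z' is ortho-adjacent to both X and Y. Then Z ∩ Z' is contained in X or Z ∩ Z' is contained in Y. -/
open Module Submodule Classical

variable {H : Type*} [NormedAddCommGroup H] [InnerProductSpace ℂ H] [CompleteSpace H]

lemma hyper_aux {W M : Submodule ℂ H} (h : CodimIn W M 1) {a b : H} (ha : a ∈ M) (haW : a ∉ W)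
    (hb : b ∈ M) : ∃ c : ℂ, b - c • a ∈ W := by
  obtain ⟨_, _, h3⟩ := h
  have hne : (W.comap M.subtype).mkQ ⟨a, ha⟩ ≠ 0 := by
    intro h0
    rw [Submodule.mkQ_apply, Submodule.Quotient.mk_eq_zero] at h0
    exact haW h0
  obtain ⟨c, hc⟩ := (finrank_eq_one_iff_of_nonzero' _ hne).1 h3 ((W.comap M.subtype).mkQ ⟨b, hb⟩)
  refine ⟨c, ?_⟩
  have h1 : (W.comap M.subtype).mkQ (⟨b, hb⟩ - c • ⟨a, ha⟩) = 0 := by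
    rw [map_sub, map_smul, hc, sub_self]
  rw [Submodule.mkQ_apply, Submodule.Quotient.mk_eq_zero] at h1
  exact h1

lemma exists_aux {W M : Submodule ℂ H} (h : CodimIn W M 1) : ∃ a ∈ M, a ∉ W := by
  by_contra hcon
  push Not at hcon
  obtain ⟨_, _, h3⟩ := h
  have : finrank ℂ (↥M ⧸ W.comap M.subtype) ≤ 0 := by
    have ht : W.comap M.subtype = ⊤ := by
      ext x
      simpa using hcon x x.2
    have : Subsingleton (↥M ⧸ W.comap M.subtype) := Submodule.Quotient.subsingleton_iff.2 ht
    rw [finrank_zero_of_subsingleton]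
  omega

lemma two_aux {W M : Submodule ℂ H} (h : CodimIn W M 2) {a : H} (ha : a ∈ M)
    (hall : ∀ b ∈ M, ∃ c : ℂ, b - c • a ∈ W) : False := by
  obtain ⟨_, _, h3⟩ := h
  have := finrank_le_one (R := ℂ) ((W.comap M.subtype).mkQ ⟨a, ha⟩) (by
    intro w
    obtain ⟨⟨b, hb⟩, rfl⟩ := Submodule.mkQ_surjective _ w
    obtain ⟨c, hc⟩ := hall b hb
    refine ⟨c, ?_⟩
    symm
    rw [← map_smul, ← sub_eq_zero, ← map_sub, Submodule.mkQ_apply,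
      Submodule.Quotient.mk_eq_zero]
    exact hc)
  omega

/-- `Z ∩ Y` is not contained in `X`. -/
lemma notle_aux {X Y Z : Submodule ℂ H} (h2Y : CodimIn (X ⊓ Y) Y 2) (hZY : Adjacent Z Y) :
    ∃ b ∈ Z, b ∈ Y ∧ b ∉ X := by
  by_contra hcon
  push Not at hcon
  obtain ⟨a, ha, haW⟩ := exists_aux hZY.2
  refine two_aux h2Y ha fun b hb => ?_
  obtain ⟨c, hc⟩ := hyper_aux hZY.2 ha haW hb
  exact ⟨c, hcon _ hc.1 hc.2, hc.2⟩

lemma inter_le_aux {X Y Z : Submodule ℂ H} (h2X : CodimIn (X ⊓ Y) X 2)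
    (hZX : Adjacent Z X) (hZY : Adjacent Z Y) : X ⊓ Y ≤ Z := by
  intro w hw
  by_contra hwZ
  obtain ⟨a, haZ, haX, haY⟩ := notle_aux (inf_comm X Y ▸ h2X) hZX
  refine two_aux h2X haX fun b hb => ?_
  obtain ⟨c, hc⟩ := hyper_aux hZX.2 hw.1 (fun h => hwZ h.1) hb
  obtain ⟨d, hd⟩ := hyper_aux hZY.1 haZ (fun h => haY h.2) hc.1
  refine ⟨d, X.sub_mem hb (X.smul_mem d haX), ?_⟩
  have := Y.add_mem hd.2 (Y.smul_mem c hw.2)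
  have he : b - c • w - d • a + c • w = b - d • a := by abel
  rw [he] at this
  exact this

lemma decomp_aux {X Y Z : Submodule ℂ H} (h2Y : CodimIn (X ⊓ Y) Y 2)
    (hZX : Adjacent Z X) (hZY : Adjacent Z Y) {v : H} (hv : v ∈ Z) :
    ∃ x ∈ Z, x ∈ X ∧ v - x ∈ Z ∧ v - x ∈ Y := by
  obtain ⟨b, hbZ, hbY, hbX⟩ := notle_aux h2Y hZY
  obtain ⟨c, hc⟩ := hyper_aux hZX.1 hbZ (fun h => hbX h.2) hv
  refine ⟨_, hc.1, hc.2, ?_⟩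
  rw [sub_sub_cancel]
  exact ⟨Z.smul_mem _ hbZ, Y.smul_mem _ hbY⟩

/-- If `x ∈ Z ∩ Z' ∩ X` is outside `Y`, then `Z ∩ X ≤ Z'`. -/
lemma side_aux {X Y Z Z' : Submodule ℂ H} (hZY : Adjacent Z Y) (hW : X ⊓ Y ≤ Z')
    {x : H} (hxZ : x ∈ Z) (hxZ' : x ∈ Z') (hxX : x ∈ X) (hxY : x ∉ Y)
    {b : H} (hbZ : b ∈ Z) (hbX : b ∈ X) : b ∈ Z' := by
  obtain ⟨c, hc⟩ := hyper_aux hZY.1 hxZ (fun h => hxY h.2) hbZ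
  have h1 : b - c • x ∈ Z' := hW ⟨X.sub_mem hbX (X.smul_mem c hxX), hc.2⟩
  simpa using Z'.add_mem h1 (Z'.smul_mem c hxZ')

/-- if `X ∩ Y` has codimension 2 in both `X, Y ∈ G_∞(H)` and `Z, Z' ∈ G_∞(H)`
are ortho-adjacent to each other and each is ortho-adjacent to both `X` and `Y`, then
`Z ∩ Z' ⊆ X` or `Z ∩ Z' ⊆ Y`. -/
theorem stmt5 (hH : ¬FiniteDimensional ℂ H) (X Y Z Z' : Submodule ℂ H)
    (hX : X ∈ Ginf (H := H)) (hY : Y ∈ Ginf (H := H))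
    (hZ : Z ∈ Ginf (H := H)) (hZ' : Z' ∈ Ginf (H := H))
    (h2X : CodimIn (X ⊓ Y) X 2) (h2Y : CodimIn (X ⊓ Y) Y 2)
    (hZZ' : OrthoAdjacent Z Z')
    (hZX : OrthoAdjacent Z X) (hZY : OrthoAdjacent Z Y)
    (hZ'X : OrthoAdjacent Z' X) (hZ'Y : OrthoAdjacent Z' Y) :
    Z ⊓ Z' ≤ X ∨ Z ⊓ Z' ≤ Y := by
  have hZX := hZX.1
  have hZY := hZY.1
  have hZ'X := hZ'X.1
  have hZ'Y := hZ'Y.1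
  have key : ∀ v ∈ Z ⊓ Z', v ∈ X ∨ v ∈ Y := by
    rintro v ⟨hvZ, hvZ'⟩
    by_contra! hcon
    obtain ⟨hvX, hvY⟩ := hcon
    have hW' := inter_le_aux h2X hZ'X hZ'Y
    obtain ⟨x, hxZ, hxX, hyZ, hyY⟩ := decomp_aux h2Y hZX hZY hvZ
    obtain ⟨x', hxZ', hxX', hyZ', hyY'⟩ := decomp_aux h2Y hZ'X hZ'Y hvZ'
    have hd : x - x' ∈ Z' := by
      refine hW' ⟨X.sub_mem hxX hxX', ?_⟩
      have := Y.sub_mem hyY' hyY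
      rwa [sub_sub_sub_cancel_left] at this
    have hx1 : x ∈ Z' := by simpa using Z'.add_mem hd hxZ'
    have hy1 : v - x ∈ Z' := Z'.sub_mem hvZ' hx1
    have hxY : x ∉ Y := fun h => hvY (by simpa using Y.add_mem hyY h)
    have hyX : v - x ∉ X := fun h => hvX (by simpa using X.add_mem h hxX)
    obtain ⟨a, haZ, haW⟩ := exists_aux hZZ'.1.1
    obtain ⟨p, hpZ, hpX, hqZ, hqY⟩ := decomp_aux h2Y hZX hZY haZ
    have h1 : p ∈ Z' := side_aux hZY hW' hxZ hx1 hxX hxY hpZ hpX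
    have h2 : a - p ∈ Z' := side_aux hZX (inf_comm X Y ▸ hW') hyZ hy1 hyY hyX hqZ hqY
    exact haW ⟨haZ, by simpa using Z'.add_mem h2 h1⟩
  by_contra! hcon
  obtain ⟨h1, h2⟩ := hcon
  obtain ⟨u, hu, huX⟩ := SetLike.not_le_iff_exists.1 h1
  obtain ⟨w, hw, hwY⟩ := SetLike.not_le_iff_exists.1 h2
  have huY := (key u hu).resolve_left huX
  have hwX := (key w hw).resolve_right hwY
  rcases key _ (Submodule.add_mem _ hu hw) with h | h
  · exact huX ((Submodule.add_mem_iff_left X hwX).1 h)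
  · exact hwY ((Submodule.add_mem_iff_right Y huY).1 h)
end
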